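/- arXiv:1911.03354 — 13 statements merged into one kernel-verified Lean document; each statement's English description precedes it below -/
import Mathlib

section
/- The group G_{d,q} equals, as a set, the union over m ∈ {0,1,2} and i, j, k ∈ {0, …, d−1} of the matrices B^m · D_{i,j,k}; that is, every element of G_{d,q} is of the form B^m times a diagonal matrix diag(ξ^{jq+k}, ξ^{i+kq}, ξ^{iq+j}), and conversely all such products lie in G_{d,q}. -/
open Matrix

/-- The group `G_{d,q}` equals, as a set, the union over `m ∈ {0,1,2}` and
`i, j, k ∈ {0, …, d−1}` of the matrices `B^m · D_{i,j,k}` where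
`D_{i,j,k} = diag(ξ^{jq+k}, ξ^{i+kq}, ξ^{iq+j})`. -/
theorem stmt_1 (d q : ℕ) (hd : 1 ≤ d) (hq : q < d) (hdq : Nat.gcd d q = 1)
    (ξ : ℂ) (hξ : IsPrimitiveRoot ξ d)
    (A B : (Matrix (Fin 3) (Fin 3) ℂ)ˣ)
    (hA : (A : Matrix (Fin 3) (Fin 3) ℂ) = Matrix.diagonal ![1, ξ, ξ ^ q])
    (hB : (B : Matrix (Fin 3) (Fin 3) ℂ) = !![0,1,0; 0,0,1; 1,0,0])
    (g : (Matrix (Fin 3) (Fin 3) ℂ)ˣ) :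
    g ∈ Subgroup.closure {A, B} ↔
      ∃ m < 3, ∃ i < d, ∃ j < d, ∃ k < d,
        (g : Matrix (Fin 3) (Fin 3) ℂ) =
          (B : Matrix (Fin 3) (Fin 3) ℂ) ^ m *
            Matrix.diagonal ![ξ ^ (j * q + k), ξ ^ (i + k * q), ξ ^ (i * q + j)] := by
  have h1 : ξ ^ d = 1 := hξ.pow_eq_one
  have hB3 : (B : Matrix (Fin 3) (Fin 3) ℂ) ^ 3 = 1 := by
    rw [hB]; ext a b
    fin_cases a <;> fin_cases b <;> simp [pow_succ, Matrix.mul_apply, Fin.sum_univ_three]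
  have hAp : ∀ n : ℕ, (A : Matrix (Fin 3) (Fin 3) ℂ) ^ n
      = Matrix.diagonal ![ξ ^ (0 * q + 0), ξ ^ (n + 0 * q), ξ ^ (n * q + 0)] := by
    intro n
    rw [hA, Matrix.diagonal_pow]
    congr 1
    ext a
    fin_cases a <;> simp [← pow_mul, mul_comm]
  have hcomm : ∀ x y z : ℂ, Matrix.diagonal ![x, y, z] * (B : Matrix (Fin 3) (Fin 3) ℂ)
      = (B : Matrix (Fin 3) (Fin 3) ℂ) * Matrix.diagonal ![z, x, y] := by
    intro x y z
    rw [hB]; ext a b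
    fin_cases a <;> fin_cases b <;> simp [Matrix.mul_apply, Fin.sum_univ_three, Matrix.diagonal]
  have hBu : B ^ 3 = 1 := by ext1; simpa using hB3
  have hAu : A ^ d = 1 := by
    ext1
    rw [Units.val_pow_eq_pow_val, hA, Matrix.diagonal_pow, Units.val_one, ← Matrix.diagonal_one]
    congr 1
    ext a
    fin_cases a <;> simp [h1, ← pow_mul, mul_comm q d]
    simp [pow_mul, h1]
  have hAinv : A⁻¹ = A ^ (d - 1) := by
    rw [inv_eq_iff_mul_eq_one, ← pow_succ', Nat.sub_add_cancel hd, hAu]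
  have hBinv : B⁻¹ = B ^ 2 := by
    rw [inv_eq_iff_mul_eq_one, ← pow_succ', hBu]
  constructor
  · intro hg
    have key : ∃ m i j k : ℕ, (g : Matrix (Fin 3) (Fin 3) ℂ) =
          (B : Matrix (Fin 3) (Fin 3) ℂ) ^ m *
            Matrix.diagonal ![ξ ^ (j * q + k), ξ ^ (i + k * q), ξ ^ (i * q + j)] := by
      have sA : ∀ (n : ℕ) (x : (Matrix (Fin 3) (Fin 3) ℂ)ˣ), (∃ m i j k : ℕ,
          (x : Matrix (Fin 3) (Fin 3) ℂ) = (B : Matrix (Fin 3) (Fin 3) ℂ) ^ m *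
            Matrix.diagonal ![ξ ^ (j * q + k), ξ ^ (i + k * q), ξ ^ (i * q + j)]) →
          ∃ m i j k : ℕ, ((x * A ^ n : (Matrix (Fin 3) (Fin 3) ℂ)ˣ) : Matrix (Fin 3) (Fin 3) ℂ)
            = (B : Matrix (Fin 3) (Fin 3) ℂ) ^ m *
            Matrix.diagonal ![ξ ^ (j * q + k), ξ ^ (i + k * q), ξ ^ (i * q + j)] := by
        rintro n x ⟨m, i, j, k, h⟩
        refine ⟨m, i + n, j, k, ?_⟩
        rw [Units.val_mul, Units.val_pow_eq_pow_val, h, hAp, mul_assoc,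
          Matrix.diagonal_mul_diagonal]
        congr 2
        ext a
        fin_cases a <;> simp [← pow_add] <;> congr 1 <;> ring
      have sB : ∀ (x : (Matrix (Fin 3) (Fin 3) ℂ)ˣ), (∃ m i j k : ℕ,
          (x : Matrix (Fin 3) (Fin 3) ℂ) = (B : Matrix (Fin 3) (Fin 3) ℂ) ^ m *
            Matrix.diagonal ![ξ ^ (j * q + k), ξ ^ (i + k * q), ξ ^ (i * q + j)]) →
          ∃ m i j k : ℕ, ((x * B : (Matrix (Fin 3) (Fin 3) ℂ)ˣ) : Matrix (Fin 3) (Fin 3) ℂ)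
            = (B : Matrix (Fin 3) (Fin 3) ℂ) ^ m *
            Matrix.diagonal ![ξ ^ (j * q + k), ξ ^ (i + k * q), ξ ^ (i * q + j)] := by
        rintro x ⟨m, i, j, k, h⟩
        refine ⟨m + 1, k, i, j, ?_⟩
        rw [Units.val_mul, h, mul_assoc, hcomm, ← mul_assoc, ← pow_succ,
          add_comm k (j * q), add_comm (k * q) i]
      induction hg using Subgroup.closure_induction_right with
      | one => exact ⟨0, 0, 0, 0, by
          have := hAp 0
          rw [pow_zero] at this
          simpa using this⟩
      | mul_right x hx y hy ih =>
        rcases hy with rfl | rfl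
        · simpa using sA 1 x ih
        · exact sB x ih
      | mul_inv_cancel x hx y hy ih =>
        rcases hy with rfl | rfl
        · rw [hAinv]; exact sA _ x ih
        · rw [hBinv, pow_two, ← mul_assoc]; exact sB _ (sB x ih)
    obtain ⟨m, i, j, k, h⟩ := key
    have e : ∀ n : ℕ, ξ ^ (n % d) = ξ ^ n := fun n => (pow_eq_pow_mod n h1).symm
    refine ⟨m % 3, Nat.mod_lt _ (by norm_num), i % d, Nat.mod_lt _ hd, j % d, Nat.mod_lt _ hd,
      k % d, Nat.mod_lt _ hd, ?_⟩
    rw [h, pow_eq_pow_mod m hB3]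
    simp only [pow_add, pow_mul, e]
  · rintro ⟨m, -, i, -, j, -, k, -, h⟩
    have hAm : A ∈ Subgroup.closure {A, B} := Subgroup.subset_closure (by simp)
    have hBm : B ∈ Subgroup.closure {A, B} := Subgroup.subset_closure (by simp)
    have : g = B ^ m * (A ^ i * (B ^ 2 * A ^ j * B) * (B * A ^ k * B ^ 2)) := by
      ext1
      simp only [Units.val_mul, Units.val_pow_eq_pow_val, h, hAp]
      congr 1
      have a1 : ∀ x y z : ℂ, (B : Matrix (Fin 3) (Fin 3) ℂ) ^ 2 * Matrix.diagonal ![x, y, z] * B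
          = Matrix.diagonal ![z, x, y] := by
        intro x y z
        rw [mul_assoc, hcomm, ← mul_assoc, ← pow_succ, hB3, one_mul]
      have a2 : ∀ x y z : ℂ, (B : Matrix (Fin 3) (Fin 3) ℂ) * Matrix.diagonal ![x, y, z] * B ^ 2
          = Matrix.diagonal ![y, z, x] := by
        intro x y z
        rw [pow_two, mul_assoc, ← mul_assoc (Matrix.diagonal _), hcomm, mul_assoc, hcomm,
          ← mul_assoc, ← mul_assoc, ← pow_two, ← pow_succ, hB3, one_mul]
      rw [a1, a2, Matrix.diagonal_mul_diagonal, Matrix.diagonal_mul_diagonal]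
      congr 1
      ext a
      fin_cases a <;> simp [← pow_add]
    rw [this]
    have p := fun n => Subgroup.pow_mem _ hAm n
    have r := fun n => Subgroup.pow_mem _ hBm n
    exact mul_mem (r _) (mul_mem (mul_mem (p _) (mul_mem (mul_mem (r _) (p _)) hBm))
      (mul_mem (mul_mem hBm (p _)) (r _)))
end

section
/- Let d' = gcd(d, q³+1). The set of triples (i, j, k) ∈ (ℤ/dℤ)³ satisfying the system of congruences jq + k ≡ 0, i + kq ≡ 0, iq + j ≡ 0 (mod d) is exactly { (q²ℓ(d/d'), ℓ(d/d'), −qℓ(d/d')) mod d : ℓ = 0, 1, …, d'−1 }; in particular the system has exactly d' = gcd(d, q³+1) solutions in (ℤ/dℤ)³. -/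
/-- Let `d' = gcd(d, q³+1)`.  The set of triples `(i,j,k) ∈ (ℤ/dℤ)³` satisfying
`jq + k ≡ 0`, `i + kq ≡ 0`, `iq + j ≡ 0 (mod d)` is exactly
`{ (q²ℓ(d/d'), ℓ(d/d'), −qℓ(d/d')) mod d : ℓ = 0, …, d'−1 }`;
in particular the system has exactly `d'` solutions. -/
theorem stmt_2 (d q : ℕ) (hd : 1 ≤ d) (hq : q < d) (hdq : Nat.gcd d q = 1) :
    {x : ZMod d × ZMod d × ZMod d |
        x.2.1 * (q : ZMod d) + x.2.2 = 0 ∧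
        x.1 + x.2.2 * (q : ZMod d) = 0 ∧
        x.1 * (q : ZMod d) + x.2.1 = 0} =
      {x : ZMod d × ZMod d × ZMod d |
        ∃ ℓ < Nat.gcd d (q ^ 3 + 1),
          x = (((q ^ 2 * ℓ * (d / Nat.gcd d (q ^ 3 + 1)) : ℕ) : ZMod d),
               ((ℓ * (d / Nat.gcd d (q ^ 3 + 1)) : ℕ) : ZMod d),
               -((q * ℓ * (d / Nat.gcd d (q ^ 3 + 1)) : ℕ) : ZMod d))} ∧
    {x : ZMod d × ZMod d × ZMod d |
        x.2.1 * (q : ZMod d) + x.2.2 = 0 ∧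
        x.1 + x.2.2 * (q : ZMod d) = 0 ∧
        x.1 * (q : ZMod d) + x.2.1 = 0}.ncard = Nat.gcd d (q ^ 3 + 1) := by
  have : NeZero d := ⟨by omega⟩
  have hg : 0 < Nat.gcd d (q ^ 3 + 1) := Nat.gcd_pos_of_pos_left _ hd
  have hde : Nat.gcd d (q ^ 3 + 1) * (d / Nat.gcd d (q ^ 3 + 1)) = d :=
    Nat.mul_div_cancel' (Nat.gcd_dvd_left _ _)
  have hkey : ∀ n : ℕ, d ∣ n * (q ^ 3 + 1) ↔ d / Nat.gcd d (q ^ 3 + 1) ∣ n := by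
    intro n
    constructor
    · intro h
      have hc : Nat.Coprime (d / Nat.gcd d (q ^ 3 + 1))
          ((q ^ 3 + 1) / Nat.gcd d (q ^ 3 + 1)) := Nat.coprime_div_gcd_div_gcd hg
      refine hc.dvd_of_dvd_mul_right ?_
      apply Nat.dvd_of_mul_dvd_mul_left hg
      rw [hde, mul_left_comm, Nat.mul_div_cancel' (Nat.gcd_dvd_right _ _)]
      exact h
    · rintro ⟨m, rfl⟩
      obtain ⟨c, hc⟩ := Nat.gcd_dvd_right d (q ^ 3 + 1)
      refine ⟨m * c, ?_⟩
      calc _ = d / Nat.gcd d (q ^ 3 + 1) * m * (Nat.gcd d (q ^ 3 + 1) * c) := by rw [← hc]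
        _ = (Nat.gcd d (q ^ 3 + 1) * (d / Nat.gcd d (q ^ 3 + 1))) * (m * c) := by ring
        _ = _ := by rw [hde]
  generalize Nat.gcd d (q ^ 3 + 1) = g at *
  generalize d / g = e at *
  have he : 0 < e := by
    rcases Nat.eq_zero_or_pos e with h | h
    · subst h; omega
    · exact h
  refine (and_iff_left_of_imp (fun hset => ?_)).2 ?_
  · rw [hset]
    have himg : {x : ZMod d × ZMod d × ZMod d | ∃ ℓ < g,
          x = (((q ^ 2 * ℓ * e : ℕ) : ZMod d), ((ℓ * e : ℕ) : ZMod d),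
               -((q * ℓ * e : ℕ) : ZMod d))} =
        (fun ℓ : ℕ => ((((q ^ 2 * ℓ * e : ℕ) : ZMod d), ((ℓ * e : ℕ) : ZMod d),
               -((q * ℓ * e : ℕ) : ZMod d)) : ZMod d × ZMod d × ZMod d)) ''
          (Finset.range g : Set ℕ) := by
      ext x
      simp only [Set.mem_setOf_eq, Set.mem_image, Finset.coe_range, Set.mem_Iio, eq_comm]
    rw [himg, Set.ncard_image_of_injOn, Set.ncard_coe_finset, Finset.card_range]
    intro a ha b hb hab
    simp only [Finset.coe_range, Set.mem_Iio] at ha hb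
    have h2 := congrArg (fun x => x.2.1) hab
    simp only [] at h2
    rw [ZMod.natCast_eq_natCast_iff] at h2
    have hlt : ∀ c, c < g → c * e < d := fun c hc => by
      rw [← hde]; exact Nat.mul_lt_mul_of_pos_right hc he
    have := Nat.ModEq.eq_of_lt_of_lt h2 (hlt a ha) (hlt b hb)
    exact Nat.eq_of_mul_eq_mul_right he this
  · ext ⟨i, j, k⟩
    simp only [Set.mem_setOf_eq, Prod.mk.injEq]
    constructor
    · rintro ⟨h1, h2, h3⟩
      have hj : j * ((q : ZMod d) ^ 3 + 1) = 0 := by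
        linear_combination h3 - q * h2 + q ^ 2 * h1
      have hjv : ((j.val : ℕ) : ZMod d) = j := ZMod.natCast_zmod_val j
      have hdv : d ∣ j.val * (q ^ 3 + 1) := by
        rw [← ZMod.natCast_eq_zero_iff]
        push_cast
        rw [hjv]; exact hj
      obtain ⟨l, hl⟩ := (hkey _).1 hdv
      have hj' : j = (l : ZMod d) * (e : ZMod d) := by
        rw [← hjv, hl]; push_cast; ring
      refine ⟨l, ?_, ?_, ?_, ?_⟩
      · have := ZMod.val_lt j
        rw [hl, ← hde, mul_comm g e] at this
        exact Nat.lt_of_mul_lt_mul_left this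
      · push_cast
        linear_combination h2 - q * h1 + q ^ 2 * hj'
      · push_cast; exact hj'
      · push_cast
        linear_combination h1 - q * hj'
    · rintro ⟨l, hl, rfl, rfl, rfl⟩
      have h0 : ((l * e * (q ^ 3 + 1) : ℕ) : ZMod d) = 0 := by
        rw [ZMod.natCast_eq_zero_iff]
        exact (hkey _).2 (Dvd.intro_left _ rfl)
      push_cast at h0 ⊢
      refine ⟨by ring, by ring, by linear_combination h0⟩
end

section
/- The order of the subgroup G_{d,q} of GL₃(ℂ) generated by A and B equals 3d³/gcd(d, q³+1). -/
open Matrix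

noncomputable def Gdq.Phi : (Fin 3 → ℂˣ) →* (Matrix (Fin 3) (Fin 3) ℂ)ˣ :=
  (Units.map (Matrix.diagonalRingHom (Fin 3) ℂ).toMonoidHom).comp
    (MulEquiv.piUnits.symm.toMonoidHom)

noncomputable def Gdq.D (u : ℂˣ) (a b c : ℤ) : (Matrix (Fin 3) (Fin 3) ℂ)ˣ :=
  Gdq.Phi ![u ^ a, u ^ b, u ^ c]

theorem Gdq.D_val (u : ℂˣ) (a b c : ℤ) :
    (Gdq.D u a b c : Matrix (Fin 3) (Fin 3) ℂ) =
      !![(u : ℂ) ^ a, 0, 0; 0, (u : ℂ) ^ b, 0; 0, 0, (u : ℂ) ^ c] := by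
  ext i j
  fin_cases i <;> fin_cases j <;> simp [Gdq.D, Gdq.Phi, MulEquiv.piUnits]

theorem Gdq.D_mul (u : ℂˣ) (a b c a' b' c' : ℤ) :
    Gdq.D u a b c * Gdq.D u a' b' c' = Gdq.D u (a + a') (b + b') (c + c') := by
  unfold Gdq.D
  rw [← map_mul]
  congr 1
  ext i
  fin_cases i <;> simp [zpow_add₀]

theorem Gdq.D_zpow (u : ℂˣ) (a b c n : ℤ) :
    Gdq.D u a b c ^ n = Gdq.D u (a * n) (b * n) (c * n) := by
  unfold Gdq.D
  rw [← map_zpow]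
  congr 1
  ext i
  fin_cases i <;> simp [_root_.zpow_mul]

theorem Gdq.D_inv (u : ℂˣ) (a b c : ℤ) :
    (Gdq.D u a b c)⁻¹ = Gdq.D u (-a) (-b) (-c) := by
  have := Gdq.D_zpow u a b c (-1)
  simpa using this

theorem Gdq.B_D (u : ℂˣ) (B : (Matrix (Fin 3) (Fin 3) ℂ)ˣ)
    (hB : (B : Matrix (Fin 3) (Fin 3) ℂ) = !![0,1,0; 0,0,1; 1,0,0]) (a b c : ℤ) :
    B * Gdq.D u a b c = Gdq.D u b c a * B := by
  apply Units.ext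
  rw [Units.val_mul, Units.val_mul, Gdq.D_val, Gdq.D_val, hB]
  ext i j
  fin_cases i <;> fin_cases j <;> simp [Matrix.mul_apply, Fin.sum_univ_three]

theorem Gdq.B2 (B : (Matrix (Fin 3) (Fin 3) ℂ)ˣ)
    (hB : (B : Matrix (Fin 3) (Fin 3) ℂ) = !![0,1,0; 0,0,1; 1,0,0]) :
    ((B ^ 2 : (Matrix (Fin 3) (Fin 3) ℂ)ˣ) : Matrix (Fin 3) (Fin 3) ℂ)
      = !![0,0,1; 1,0,0; 0,1,0] := by
  rw [Units.val_pow_eq_pow_val, hB, pow_two]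
  ext i j
  fin_cases i <;> fin_cases j <;> simp [Matrix.mul_apply, Fin.sum_univ_three]

theorem Gdq.B3 (B : (Matrix (Fin 3) (Fin 3) ℂ)ˣ)
    (hB : (B : Matrix (Fin 3) (Fin 3) ℂ) = !![0,1,0; 0,0,1; 1,0,0]) : B ^ 3 = 1 := by
  apply Units.ext
  rw [pow_succ, Units.val_mul, Gdq.B2 B hB, hB]
  ext i j
  fin_cases i <;> fin_cases j <;> simp [Matrix.mul_apply, Fin.sum_univ_three]

theorem Gdq.mem_form (g q : ℕ) (hg : ((q : ZMod g)) ^ 3 + 1 = 0) (u : ℂˣ)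
    (A B : (Matrix (Fin 3) (Fin 3) ℂ)ˣ) (hA : A = Gdq.D u 0 1 q)
    (hB : (B : Matrix (Fin 3) (Fin 3) ℂ) = !![0,1,0; 0,0,1; 1,0,0])
    (M : (Matrix (Fin 3) (Fin 3) ℂ)ˣ) (hM : M ∈ Subgroup.closure {A, B}) :
    ∃ (a b c : ℤ) (k : ℕ), (q : ZMod g) ^ 2 * a - q * b + c = 0 ∧ M = Gdq.D u a b c * B ^ k := by
  have hB3 := Gdq.B3 B hB
  have hBi : B⁻¹ = B * B := by
    rw [inv_eq_iff_mul_eq_one, ← hB3, pow_succ, pow_two, mul_assoc]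
  have key : ∀ y, (∃ (a b c : ℤ) (k : ℕ), (q : ZMod g) ^ 2 * a - q * b + c = 0 ∧
      y = Gdq.D u a b c * B ^ k) → (∃ (a b c : ℤ) (k : ℕ), (q : ZMod g) ^ 2 * a - q * b + c = 0 ∧
      B * y = Gdq.D u a b c * B ^ k) := by
    rintro y ⟨a, b, c, k, h, rfl⟩
    refine ⟨b, c, a, k + 1, ?_, ?_⟩
    · linear_combination (-(q : ZMod g)) * h + a * hg
    · rw [← mul_assoc, Gdq.B_D u B hB, pow_succ', mul_assoc]
  induction hM using Subgroup.closure_induction_left with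
  | one => exact ⟨0, 0, 0, 0, by simp, by simpa using Gdq.D_zpow u 0 0 0 0⟩
  | mul_left x hx y hy ih =>
    rcases hx with rfl | rfl
    · obtain ⟨a, b, c, k, h, rfl⟩ := ih
      refine ⟨0 + a, 1 + b, q + c, k, ?_, ?_⟩
      · push_cast
        linear_combination h
      · rw [← mul_assoc, hA, Gdq.D_mul]
    · exact key _ ih
  | inv_mul_cancel x hx y hy ih =>
    rcases hx with rfl | rfl
    · obtain ⟨a, b, c, k, h, rfl⟩ := ih
      refine ⟨-0 + a, -1 + b, -q + c, k, ?_, ?_⟩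
      · push_cast
        linear_combination h
      · rw [← mul_assoc, hA, Gdq.D_inv, Gdq.D_mul]
    · rw [hBi, mul_assoc]
      exact key _ (key _ ih)

theorem Gdq.form_mem (d q : ℕ) (u : ℂˣ) (hu : u ^ d = 1)
    (A B : (Matrix (Fin 3) (Fin 3) ℂ)ˣ) (hA : A = Gdq.D u 0 1 q)
    (hB : (B : Matrix (Fin 3) (Fin 3) ℂ) = !![0,1,0; 0,0,1; 1,0,0])
    (a b c : ℤ) (k : ℕ) (h : (q : ZMod (Nat.gcd d (q ^ 3 + 1))) ^ 2 * a - q * b + c = 0) :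
    Gdq.D u a b c * B ^ k ∈ Subgroup.closure {A, B} := by
  have hAm : A ∈ Subgroup.closure {A, B} := Subgroup.subset_closure (by simp)
  have hBm : B ∈ Subgroup.closure {A, B} := Subgroup.subset_closure (by simp)
  refine mul_mem ?_ (pow_mem hBm k)
  have h1 : Gdq.D u 0 1 q ∈ Subgroup.closure {A, B} := hA ▸ hAm
  have h2 : Gdq.D u 1 q 0 ∈ Subgroup.closure {A, B} := by
    have : Gdq.D u 1 q 0 = B * A * B⁻¹ := by rw [hA, Gdq.B_D u B hB]; group
    rw [this]
    exact mul_mem (mul_mem hBm hAm) (inv_mem hBm)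
  have h3 : Gdq.D u q 0 1 ∈ Subgroup.closure {A, B} := by
    have : Gdq.D u q 0 1 = B⁻¹ * (A * B) := by rw [hA, ← Gdq.B_D u B hB]; group
    rw [this]
    exact mul_mem (inv_mem hBm) (mul_mem hAm hBm)
  have h' : (((q : ℤ) ^ 2 * a - q * b + c : ℤ) : ZMod (Nat.gcd d (q ^ 3 + 1))) = 0 := by
    push_cast; exact h
  rw [ZMod.intCast_zmod_eq_zero_iff_dvd] at h'
  obtain ⟨m, hm⟩ := h'
  rw [Nat.gcd_eq_gcd_ab] at hm
  set s := Nat.gcdA d (q ^ 3 + 1)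
  set t := Nat.gcdB d (q ^ 3 + 1)
  push_cast at hm
  have h4 := mul_mem (mul_mem (zpow_mem h2 (a - q * (m * t))) (zpow_mem h1 (b - q * a + q ^ 2 * (m * t))))
    (zpow_mem h3 (m * t))
  rw [Gdq.D_zpow, Gdq.D_zpow, Gdq.D_zpow, Gdq.D_mul, Gdq.D_mul] at h4
  convert h4 using 1
  have hud : ∀ n : ℤ, u ^ ((d : ℤ) * n) = 1 := by
    intro n; rw [_root_.zpow_mul, zpow_natCast, hu, _root_.one_zpow]
  unfold Gdq.D
  have e1 : 1 * (a - q * (m * t)) + 0 * (b - q * a + q ^ 2 * (m * t)) + q * (m * t) = a := by ring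
  have e2 : q * (a - q * (m * t)) + 1 * (b - q * a + q ^ 2 * (m * t)) + 0 * (m * t) = b := by ring
  have e3 : c = 0 * (a - q * (m * t)) + q * (b - q * a + q ^ 2 * (m * t)) + 1 * (m * t)
      + d * (s * m) := by linear_combination hm
  have e4 : u ^ c = u ^ (0 * (a - q * (m * t)) + q * (b - q * a + q ^ 2 * (m * t)) + 1 * (m * t)) := by
    conv_lhs => rw [e3, _root_.zpow_add, hud, mul_one]
  rw [e1, e2, e4]

noncomputable def Gdq.phi (d g q : ℕ) (h : g ∣ d) : (ZMod d × ZMod d × ZMod d) →+ ZMod g where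
  toFun v := (q : ZMod g) ^ 2 * ZMod.castHom h (ZMod g) v.1
    - q * ZMod.castHom h (ZMod g) v.2.1 + ZMod.castHom h (ZMod g) v.2.2
  map_zero' := by simp
  map_add' x y := by
    simp only [Prod.fst_add, Prod.snd_add, map_add]; ring

theorem Gdq.card_ker (d g q : ℕ) (h : g ∣ d) :
    Nat.card (Gdq.phi d g q h).ker * g = d ^ 3 := by
  have hs : Function.Surjective (Gdq.phi d g q h) := by
    intro y
    obtain ⟨x, hx⟩ := ZMod.castHom_surjective h y
    exact ⟨(0, 0, x), by simp only [Gdq.phi, AddMonoidHom.coe_mk, ZeroHom.coe_mk, hx]; simp⟩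
  have h1 := AddSubgroup.card_mul_index (Gdq.phi d g q h).ker
  rw [AddSubgroup.index_ker, AddMonoidHom.range_eq_top.mpr hs] at h1
  simp only [AddSubgroup.card_top, Nat.card_prod, Nat.card_zmod] at h1
  rw [h1]; ring

/-- The order of the subgroup `G_{d,q} ⊂ GL₃(ℂ)` generated by `A` and `B`
equals `3d³ / gcd(d, q³+1)`. -/
theorem stmt_3 (d q : ℕ) (hd : 1 ≤ d) (hq : q < d) (hdq : Nat.gcd d q = 1)
    (ξ : ℂ) (hξ : IsPrimitiveRoot ξ d)
    (A B : (Matrix (Fin 3) (Fin 3) ℂ)ˣ)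
    (hA : (A : Matrix (Fin 3) (Fin 3) ℂ) = Matrix.diagonal ![1, ξ, ξ ^ q])
    (hB : (B : Matrix (Fin 3) (Fin 3) ℂ) = !![0,1,0; 0,0,1; 1,0,0]) :
    Nat.card ↥(Subgroup.closure {A, B}) = 3 * d ^ 3 / Nat.gcd d (q ^ 3 + 1) := by
  have hd0 : d ≠ 0 := by omega
  haveI : NeZero d := ⟨hd0⟩
  have hξ0 : ξ ≠ 0 := hξ.ne_zero hd0
  obtain ⟨u, hu⟩ : ∃ u : ℂˣ, (u : ℂ) = ξ := ⟨Units.mk0 ξ hξ0, rfl⟩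
  have hud : u ^ d = 1 := by
    apply Units.ext
    rw [Units.val_pow_eq_pow_val, hu, hξ.pow_eq_one, Units.val_one]
  have hA' : A = Gdq.D u 0 1 q := by
    apply Units.ext
    rw [hA, Gdq.D_val, hu]
    ext i j
    fin_cases i <;> fin_cases j <;> simp
  have hgd : Nat.gcd d (q ^ 3 + 1) ∣ d := Nat.gcd_dvd_left _ _
  have hg0 : 0 < Nat.gcd d (q ^ 3 + 1) := Nat.gcd_pos_of_pos_left _ hd
  have hgq : (q : ZMod (Nat.gcd d (q ^ 3 + 1))) ^ 3 + 1 = 0 := by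
    have := (ZMod.natCast_eq_zero_iff (q ^ 3 + 1) (Nat.gcd d (q ^ 3 + 1))).2 (Nat.gcd_dvd_right _ _)
    exact_mod_cast this
  have hfm := Gdq.form_mem d q u hud A B hA' hB
  have hmf := Gdq.mem_form _ q hgq u A B hA' hB
  have hck := Gdq.card_ker d _ q hgd
  generalize Nat.gcd d (q ^ 3 + 1) = g at *
  have hval : ∀ x : ZMod d, (((x.val : ℤ) : ZMod g)) = ZMod.castHom hgd (ZMod g) x := by
    intro x
    conv_rhs => rw [← ZMod.natCast_zmod_val x]
    rw [map_natCast]; simp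
  let f : (Gdq.phi d g q hgd).ker × Fin 3 → ↥(Subgroup.closure {A, B}) := fun p =>
    ⟨Gdq.D u (p.1.1.1.val : ℤ) (p.1.1.2.1.val : ℤ) (p.1.1.2.2.val : ℤ) * B ^ (p.2 : ℕ), by
      apply hfm
      rw [hval, hval, hval]
      exact p.1.2⟩
  have hinj : Function.Injective f := by
    rintro ⟨⟨⟨x, y, z⟩, hv⟩, k⟩ ⟨⟨⟨x', y', z'⟩, hv'⟩, k'⟩ he
    have he1 := congrArg (fun t : ↥(Subgroup.closure {A, B}) =>
      ((t : (Matrix (Fin 3) (Fin 3) ℂ)ˣ) : Matrix (Fin 3) (Fin 3) ℂ)) he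
    simp only [f, Units.val_mul, Gdq.D_val, hu, zpow_natCast] at he1
    have hpi : ∀ a b : ZMod d, ξ ^ a.val = ξ ^ b.val → a = b := fun a b hab =>
      ZMod.val_injective d (hξ.pow_inj (ZMod.val_lt a) (ZMod.val_lt b) hab)
    have hne : ∀ n : ℕ, ξ ^ n ≠ 0 := fun n => pow_ne_zero n hξ0
    have ent := fun i j => congrFun (congrFun he1 i) j
    have B2 := Gdq.B2 B hB
    have main : x = x' ∧ y = y' ∧ z = z' ∧ k = k' := by
      have e00 := ent 0 0
      have e01 := ent 0 1
      have e02 := ent 0 2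
      have e10 := ent 1 0
      have e11 := ent 1 1
      have e12 := ent 1 2
      have e20 := ent 2 0
      have e21 := ent 2 1
      have e22 := ent 2 2
      clear ent he1 he
      fin_cases k <;> fin_cases k' <;>
        simp [B2, hB, Matrix.mul_apply, Fin.sum_univ_three, hξ0, -Units.val_pow_eq_pow_val] at e00 e01 e02 e10 e11 e12 e20 e21 e22 <;>
        refine ⟨hpi _ _ ?_, hpi _ _ ?_, hpi _ _ ?_, rfl⟩ <;> assumption
    obtain ⟨rfl, rfl, rfl, rfl⟩ := main
    rfl
  have hsurj : Function.Surjective f := by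
    rintro ⟨M, hM⟩
    obtain ⟨a, b, c, k, h, rfl⟩ := hmf M hM
    have hr : ∀ n : ℤ, u ^ (((n : ZMod d).val : ℤ)) = u ^ n := by
      intro n
      rw [ZMod.val_intCast]
      conv_rhs => rw [← Int.emod_add_mul_ediv n d, _root_.zpow_add, _root_.zpow_mul, zpow_natCast, hud, _root_.one_zpow, mul_one]
    refine ⟨⟨⟨((a : ZMod d), (b : ZMod d), (c : ZMod d)), ?_⟩, ⟨k % 3, Nat.mod_lt _ (by norm_num)⟩⟩, ?_⟩
    · rw [AddMonoidHom.mem_ker]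
      simp only [Gdq.phi, AddMonoidHom.coe_mk, ZeroHom.coe_mk, map_intCast]
      exact h
    · apply Subtype.ext
      simp only [f, Gdq.D, hr]
      rw [← pow_eq_pow_mod k (Gdq.B3 B hB)]
  rw [← Nat.card_eq_of_bijective f ⟨hinj, hsurj⟩, Nat.card_prod, Nat.card_fin]
  symm
  apply Nat.div_eq_of_eq_mul_left hg0
  rw [← hck]; ring
end

section
/- The group G_{d,q} is small, i.e. no element γ ∈ G_{d,q} has 1 as an eigenvalue of multiplicity exactly 2 (equivalently, no γ ∈ G_{d,q} satisfies dim ker(γ − I₃) = 2), if and only if d divides q³ + 1. -/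
open Matrix

def PP (d q : ℕ) (M : Matrix (Fin 3) (Fin 3) ℂ) : Prop :=
  ∃ x y z : ℂ, x ^ d = 1 ∧ y ^ d = 1 ∧ z ^ d = 1 ∧ x ^ (q ^ 2) * z = y ^ q ∧
    (M = !![x,0,0; 0,y,0; 0,0,z] ∨ M = !![0,x,0; 0,0,y; z,0,0] ∨ M = !![0,0,x; y,0,0; 0,z,0])

lemma PP_A (d q : ℕ) (M : Matrix (Fin 3) (Fin 3) ℂ) (ζ : ℂ) (h : ζ ^ d = 1) (hM : PP d q M) :
    PP d q (Matrix.diagonal ![1, ζ, ζ ^ q] * M) := by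
  obtain ⟨x, y, z, hx, hy, hz, h1, h2⟩ := hM
  refine ⟨x, ζ * y, ζ ^ q * z, hx, by simp [mul_pow, h, hy], ?_, ?_, ?_⟩
  · rw [mul_pow, ← pow_mul, mul_comm q d, pow_mul, h, one_pow, hz, one_mul]
  · rw [mul_pow, ← h1]; ring
  · rcases h2 with rfl | rfl | rfl
    · left
      ext i j; fin_cases i <;> fin_cases j <;> simp
    · right; left
      ext i j; fin_cases i <;> fin_cases j <;> simp
    · right; right
      ext i j; fin_cases i <;> fin_cases j <;> simp

lemma PP_B (d q : ℕ) (hdv : d ∣ q ^ 3 + 1) (M : Matrix (Fin 3) (Fin 3) ℂ) (hM : PP d q M) :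
    PP d q (!![0,1,0; 0,0,1; 1,0,0] * M) := by
  obtain ⟨x, y, z, hx, hy, hz, h1, h2⟩ := hM
  refine ⟨y, z, x, hy, hz, hx, ?_, ?_⟩
  · have h3 : x ^ (q ^ 3 + 1) = 1 := by
      obtain ⟨k, hk⟩ := hdv
      rw [hk, pow_mul, hx, one_pow]
    calc y ^ (q ^ 2) * x = (y ^ q) ^ q * x := by ring
      _ = x ^ (q ^ 3 + 1) * z ^ q := by rw [← h1]; ring
      _ = z ^ q := by rw [h3, one_mul]
  · rcases h2 with rfl | rfl | rfl
    · right; left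
      ext i j; fin_cases i <;> fin_cases j <;> simp [Matrix.mul_apply, Fin.sum_univ_three]
    · right; right
      ext i j; fin_cases i <;> fin_cases j <;> simp [Matrix.mul_apply, Fin.sum_univ_three]
    · left
      ext i j; fin_cases i <;> fin_cases j <;> simp [Matrix.mul_apply, Fin.sum_univ_three]

lemma ker_le_one (M : Matrix (Fin 3) (Fin 3) ℂ)
    (h : ∀ v : Fin 3 → ℂ, M *ᵥ v = 0 → v 2 = 0 → v = 0) :
    Module.finrank ℂ (LinearMap.ker (Matrix.toLin' M)) ≤ 1 := by
  have := LinearMap.finrank_le_finrank_of_injective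
    (f := (LinearMap.proj (R := ℂ) (φ := fun _ : Fin 3 => ℂ) 2).domRestrict
      (LinearMap.ker (Matrix.toLin' M))) (by
      rw [injective_iff_map_eq_zero]
      rintro ⟨v, hv⟩ h0
      ext1
      exact h v (by simpa using hv) (by simpa using h0))
  simpa using this

lemma ker_diag (w : Fin 3 → ℂ) :
    Module.finrank ℂ (LinearMap.ker (Matrix.toLin' (Matrix.diagonal w)))
      + Fintype.card {i // w i ≠ 0} = 3 := by
  have := LinearMap.finrank_range_add_finrank_ker (Matrix.toLin' (Matrix.diagonal w))
  rw [← Matrix.rank_diagonal w, Matrix.rank, add_comm]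
  rw [Module.finrank_fin_fun] at this
  rw [Matrix.toLin'_apply'] at this ⊢
  exact this

lemma PP_ker (d q : ℕ) (hd : 1 ≤ d) (hdq : Nat.gcd d q = 1) (M : Matrix (Fin 3) (Fin 3) ℂ)
    (hM : PP d q M) :
    Module.finrank ℂ (LinearMap.ker (Matrix.toLin' (M - 1))) ≠ 2 := by
  have cop : ∀ t : ℂ, ∀ n : ℕ, Nat.gcd d n = 1 → t ^ d = 1 → t ^ n = 1 → t = 1 := by
    intro t n hn h1 h2
    have := (pow_gcd_eq_one (a := t) (m := d) (n := n)).2 ⟨h1, h2⟩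
    simpa [hn] using this
  have hq2 : Nat.gcd d (q ^ 2) = 1 := Nat.Coprime.pow_right 2 hdq
  obtain ⟨x, y, z, hx, hy, hz, h1, rfl | rfl | rfl⟩ := hM
  · have e : !![x,0,0; 0,y,0; 0,0,z] - 1 = Matrix.diagonal ![x - 1, y - 1, z - 1] := by
      ext i j; fin_cases i <;> fin_cases j <;> simp
    rw [e]
    intro h
    have h3 := ker_diag ![x - 1, y - 1, z - 1]
    rw [h, Fintype.card_subtype, Finset.card_filter, Fin.sum_univ_three] at h3
    have h4 := h3
    by_cases hx1 : x = 1 <;> by_cases hy1 : y = 1 <;> by_cases hz1 : z = 1 <;>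
      simp [hx1, hy1, hz1, sub_eq_zero] at h4
    · simp [hx1, hy1] at h1; exact hz1 h1
    · simp [hx1, hz1] at h1; exact hy1 (cop y q hdq hy h1.symm)
    · simp [hy1, hz1] at h1; exact hx1 (cop x _ hq2 hx h1)
  all_goals
    refine ne_of_lt (lt_of_le_of_lt (ker_le_one _ ?_) (by norm_num))
    intro v hv h2
    have a0 := congrFun hv 0
    have a1 := congrFun hv 1
    have a2 := congrFun hv 2
    simp [Matrix.mulVec, dotProduct, Fin.sum_univ_three, h2] at a0 a1 a2
    ext i; fin_cases i <;> simp_all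

theorem stmt_6 (d q : ℕ) (hd : 1 ≤ d) (hq : q < d) (hdq : Nat.gcd d q = 1)
    (ξ : ℂ) (hξ : IsPrimitiveRoot ξ d)
    (A B : (Matrix (Fin 3) (Fin 3) ℂ)ˣ)
    (hA : (A : Matrix (Fin 3) (Fin 3) ℂ) = Matrix.diagonal ![1, ξ, ξ ^ q])
    (hB : (B : Matrix (Fin 3) (Fin 3) ℂ) = !![0,1,0; 0,0,1; 1,0,0]) :
    (∀ γ ∈ Subgroup.closure {A, B},
        Module.finrank ℂ
          (LinearMap.ker (Matrix.toLin' ((γ : Matrix (Fin 3) (Fin 3) ℂ) - 1))) ≠ 2) ↔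
      d ∣ q ^ 3 + 1 := by
  have hξ0 : ξ ≠ 0 := hξ.ne_zero (by omega)
  have hB3 : B * (B * B) = 1 := by
    apply Units.ext
    simp only [Units.val_mul, hB, Units.val_one]
    ext i j; fin_cases i <;> fin_cases j <;> simp [Matrix.mul_apply, Fin.sum_univ_three]
  have hBi : B⁻¹ = B * B := inv_eq_of_mul_eq_one_right hB3
  have hAi : ((A⁻¹ : (Matrix (Fin 3) (Fin 3) ℂ)ˣ) : Matrix (Fin 3) (Fin 3) ℂ)
      = Matrix.diagonal ![1, ξ⁻¹, ξ⁻¹ ^ q] := by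
    apply Units.inv_eq_of_mul_eq_one_right
    rw [hA, Matrix.diagonal_mul_diagonal, ← Matrix.diagonal_one]
    congr 1
    ext i; fin_cases i <;> simp [hξ0]
  constructor
  · intro H
    have hAm : A ∈ Subgroup.closure {A, B} := Subgroup.subset_closure (by simp)
    have hBm : B ∈ Subgroup.closure {A, B} := Subgroup.subset_closure (by simp)
    have hC : ((B * A * (B * B) : (Matrix (Fin 3) (Fin 3) ℂ)ˣ) : Matrix (Fin 3) (Fin 3) ℂ)
        = Matrix.diagonal ![ξ, ξ ^ q, 1] := by
      simp only [Units.val_mul, hB, hA]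
      ext i j; fin_cases i <;> fin_cases j <;>
        simp [Matrix.mul_apply, Fin.sum_univ_three, Matrix.vecMul_diagonal]
    have hD : ((B * B * A * B : (Matrix (Fin 3) (Fin 3) ℂ)ˣ) : Matrix (Fin 3) (Fin 3) ℂ)
        = Matrix.diagonal ![ξ ^ q, 1, ξ] := by
      simp only [Units.val_mul, hB, hA]
      ext i j; fin_cases i <;> fin_cases j <;>
        simp [Matrix.mul_apply, Fin.sum_univ_three, Matrix.vecMul_diagonal]
    set C := B * A * (B * B) with hCdef
    set D := B * B * A * B with hDdef
    have hCm : C ∈ Subgroup.closure {A, B} := mul_mem (mul_mem hBm hAm) (mul_mem hBm hBm)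
    have hDm : D ∈ Subgroup.closure {A, B} := mul_mem (mul_mem (mul_mem hBm hBm) hAm) hBm
    have hv : (((C ^ q)⁻¹ * (A ^ (q ^ 2) * D) : (Matrix (Fin 3) (Fin 3) ℂ)ˣ) :
        Matrix (Fin 3) (Fin 3) ℂ) = Matrix.diagonal ![1, 1, ξ ^ (q ^ 3 + 1)] := by
      rw [Units.val_mul, Units.inv_mul_eq_iff_eq_mul]
      simp only [Units.val_mul, Units.val_pow_eq_pow_val, hC, hD, hA, Matrix.diagonal_pow,
        Matrix.diagonal_mul_diagonal]
      congr 1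
      ext i; fin_cases i <;> simp <;> ring
    have := H _ (mul_mem (inv_mem (pow_mem hCm q)) (mul_mem (pow_mem hAm (q ^ 2)) hDm))
    rw [hv] at this
    by_contra hnd
    have hne : ξ ^ (q ^ 3 + 1) ≠ 1 := fun h => hnd (hξ.dvd_of_pow_eq_one _ h)
    apply this
    have e : Matrix.diagonal ![1, 1, ξ ^ (q ^ 3 + 1)] - 1
        = Matrix.diagonal ![0, 0, ξ ^ (q ^ 3 + 1) - 1] := by
      ext i j; fin_cases i <;> fin_cases j <;> simp
    rw [e]
    have h3 := ker_diag ![0, 0, ξ ^ (q ^ 3 + 1) - 1]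
    rw [Fintype.card_subtype, Finset.card_filter, Fin.sum_univ_three] at h3
    simp [sub_eq_zero, hne] at h3
    simpa using h3
  · intro hdv γ hγ
    apply PP_ker d q hd hdq
    induction hγ using Subgroup.closure_induction_left with
    | one =>
      refine ⟨1, 1, 1, by simp, by simp, by simp, by simp, Or.inl ?_⟩
      ext i j; fin_cases i <;> fin_cases j <;> simp
    | mul_left x hx y hy ih =>
      rcases hx with rfl | rfl
      · rw [Units.val_mul, hA]; exact PP_A d q _ ξ hξ.pow_eq_one ih
      · rw [Units.val_mul, hB]; exact PP_B d q hdv _ ih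
    | inv_mul_cancel x hx y hy ih =>
      rcases hx with rfl | rfl
      · rw [Units.val_mul, hAi]
        exact PP_A d q _ ξ⁻¹ (by rw [inv_pow, hξ.pow_eq_one, inv_one]) ih
      · rw [Units.val_mul, hBi, Units.val_mul, hB, Matrix.mul_assoc]
        exact PP_B d q hdv _ (PP_B d q hdv _ ih)
end

section
/- Assume d divides q³ + 1. Then gcd(d, gcd(q+1, gcd(q²−q+1, (q³+1)/d))) = gcd(d, gcd(q+1, gcd(3, (q³+1)/d))) = gcd(3, gcd(d, (q³+1)/d)); moreover this common value γ is equal to 1 or 3. -/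
/-- Assume `d ∣ q³+1`.  Then
`gcd(d, gcd(q+1, gcd(q²−q+1, (q³+1)/d))) = gcd(d, gcd(q+1, gcd(3, (q³+1)/d)))
 = gcd(3, gcd(d, (q³+1)/d))`, and this common value `γ` is `1` or `3`. -/
theorem stmt_7 (d q : ℕ) (hd : 1 ≤ d) (hq : q < d) (hdq : Nat.gcd d q = 1)
    (hdvd : d ∣ q ^ 3 + 1) :
    Nat.gcd d (Nat.gcd (q + 1) (Nat.gcd (q ^ 2 - q + 1) ((q ^ 3 + 1) / d))) =
        Nat.gcd d (Nat.gcd (q + 1) (Nat.gcd 3 ((q ^ 3 + 1) / d))) ∧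
      Nat.gcd d (Nat.gcd (q + 1) (Nat.gcd 3 ((q ^ 3 + 1) / d))) =
        Nat.gcd 3 (Nat.gcd d ((q ^ 3 + 1) / d)) ∧
      (Nat.gcd 3 (Nat.gcd d ((q ^ 3 + 1) / d)) = 1 ∨
        Nat.gcd 3 (Nat.gcd d ((q ^ 3 + 1) / d)) = 3) := by
  generalize (q ^ 3 + 1) / d = e
  have hle : q ≤ q ^ 2 := Nat.le_self_pow (by norm_num) q
  obtain ⟨m, hm⟩ := Nat.exists_eq_add_of_le hle
  have hm' : q ^ 2 - q + 1 = m + 1 := by omega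
  have hid : (m + 1) + 3 * (q + 1) = (q + 1) * (q + 1) + 3 := by nlinarith
  have key : ∀ k, k ∣ q + 1 → (k ∣ m + 1 ↔ k ∣ 3) := by
    intro k hk
    rw [← Nat.dvd_add_left (Dvd.dvd.mul_left hk 3), hid,
      Nat.dvd_add_right (Dvd.dvd.mul_left hk (q + 1))]
  have h3 : 3 ∣ d → 3 ∣ q + 1 := by
    intro h
    have h1 : 3 ∣ q ^ 3 + 1 := h.trans hdvd
    have h2 : q % 3 = 0 ∨ q % 3 = 1 ∨ q % 3 = 2 := by omega
    rcases h2 with h2 | h2 | h2 <;>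
      simp [Nat.dvd_iff_mod_eq_zero, Nat.add_mod, Nat.pow_mod, h2] at h1 ⊢
  rw [hm']
  refine ⟨?_, ?_, (Nat.dvd_prime Nat.prime_three).1 (Nat.gcd_dvd_left _ _)⟩
  · refine Nat.dvd_antisymm ?_ ?_ <;> rw [Nat.dvd_gcd_iff, Nat.dvd_gcd_iff, Nat.dvd_gcd_iff]
    · have h := Nat.dvd_refl (Nat.gcd d (Nat.gcd (q + 1) (Nat.gcd (m + 1) e)))
      rw [Nat.dvd_gcd_iff, Nat.dvd_gcd_iff, Nat.dvd_gcd_iff] at h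
      exact ⟨h.1, h.2.1, (key _ h.2.1).1 h.2.2.1, h.2.2.2⟩
    · have h := Nat.dvd_refl (Nat.gcd d (Nat.gcd (q + 1) (Nat.gcd 3 e)))
      rw [Nat.dvd_gcd_iff, Nat.dvd_gcd_iff, Nat.dvd_gcd_iff] at h
      exact ⟨h.1, h.2.1, (key _ h.2.1).2 h.2.2.1, h.2.2.2⟩
  · apply Nat.dvd_antisymm
    · have h := Nat.dvd_refl (Nat.gcd d (Nat.gcd (q + 1) (Nat.gcd 3 e)))
      rw [Nat.dvd_gcd_iff, Nat.dvd_gcd_iff, Nat.dvd_gcd_iff] at h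
      exact Nat.dvd_gcd h.2.2.1 (Nat.dvd_gcd h.1 h.2.2.2)
    · have h := Nat.dvd_refl (Nat.gcd 3 (Nat.gcd d e))
      rw [Nat.dvd_gcd_iff, Nat.dvd_gcd_iff] at h
      refine Nat.dvd_gcd h.2.1 (Nat.dvd_gcd ?_ (Nat.dvd_gcd h.1 h.2.2))
      rcases (Nat.dvd_prime Nat.prime_three).1 h.1 with h1 | h1
      · rw [h1]; exact one_dvd _
      · rw [h1] at h ⊢
        exact h3 h.2.1
end

section
/- Let α = gcd(d, q+1). For integers i, j, the matrix B · D_{i,j} has 1 as an eigenvalue if and only if (d/α) divides i + j; and in that case the fixed space ker(B·D_{i,j} − I₃) is the one-dimensional subspace of ℂ³ spanned by the vector (ξ^{iq+i+j}, ξ^{iq+j}, 1). -/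
open Matrix

theorem aux_dvd (d q : ℕ) (hd : 1 ≤ d) (n : ℤ) :
    ((d / Nat.gcd d (q + 1) : ℕ) : ℤ) ∣ n ↔ (d : ℤ) ∣ ((q : ℤ) + 1) * n := by
  have hg : 0 < Nat.gcd d (q + 1) := Nat.gcd_pos_of_pos_left _ hd
  obtain ⟨a, ha⟩ := Nat.gcd_dvd_left d (q + 1)
  obtain ⟨b, hb⟩ := Nat.gcd_dvd_right d (q + 1)
  have hc := Nat.coprime_div_gcd_div_gcd hg
  generalize Nat.gcd d (q + 1) = g at *
  have h1 : d / g = a := by rw [ha]; exact Nat.mul_div_cancel_left _ hg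
  have h2 : (q + 1) / g = b := by rw [hb]; exact Nat.mul_div_cancel_left _ hg
  rw [h1, h2] at hc
  rw [h1]
  have hb' : (q : ℤ) + 1 = g * b := by exact_mod_cast hb
  have hg' : (g : ℤ) ≠ 0 := by exact_mod_cast hg.ne'
  rw [hb', ha, Nat.cast_mul, mul_assoc, mul_dvd_mul_iff_left hg']
  have hco : IsCoprime (a : ℤ) (b : ℤ) := Nat.isCoprime_iff_coprime.mpr hc
  exact ⟨fun h => h.mul_left _, fun h => hco.dvd_of_dvd_mul_left h⟩

theorem aux_fix (a b c : ℂ) (v : Fin 3 → ℂ) :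
    ((!![0,1,0; 0,0,1; 1,0,0] : Matrix (Fin 3) (Fin 3) ℂ) *
      Matrix.diagonal ![a, b, c]).mulVec v = v ↔
    b * v 1 = v 0 ∧ c * v 2 = v 1 ∧ a * v 0 = v 2 := by
  rw [← Matrix.mulVec_mulVec, funext_iff, Fin.forall_fin_succ, Fin.forall_fin_succ,
    Fin.forall_fin_succ]
  simp [Matrix.mulVec, dotProduct, Fin.sum_univ_three, Matrix.diagonal_apply]

/-- Let `α = gcd(d, q+1)`.  The matrix `B · D_{i,j}` has `1` as an eigenvalue if and
only if `(d/α) ∣ i + j`; and in that case its fixed space `ker(B·D_{i,j} − I₃)` is the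
line in `ℂ³` spanned by the vector `(ξ^{iq+i+j}, ξ^{iq+j}, 1)`. -/
theorem stmt_11 (d q : ℕ) (hd : 1 ≤ d) (hq : q < d) (hdq : Nat.gcd d q = 1)
    (ξ : ℂ) (hξ : IsPrimitiveRoot ξ d)
    (B : (Matrix (Fin 3) (Fin 3) ℂ)ˣ)
    (hB : (B : Matrix (Fin 3) (Fin 3) ℂ) = !![0,1,0; 0,0,1; 1,0,0])
    (i j : ℤ) :
    ((∃ v : Fin 3 → ℂ, v ≠ 0 ∧
        ((B : Matrix (Fin 3) (Fin 3) ℂ) *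
            Matrix.diagonal ![ξ ^ (j * (q : ℤ)), ξ ^ i, ξ ^ (i * (q : ℤ) + j)]).mulVec v
          = v) ↔
      ((d / Nat.gcd d (q + 1) : ℕ) : ℤ) ∣ i + j) ∧
    (((d / Nat.gcd d (q + 1) : ℕ) : ℤ) ∣ i + j →
      LinearMap.ker
          (Matrix.toLin'
            ((B : Matrix (Fin 3) (Fin 3) ℂ) *
                Matrix.diagonal ![ξ ^ (j * (q : ℤ)), ξ ^ i, ξ ^ (i * (q : ℤ) + j)] - 1)) =
        Submodule.span ℂ
          {![ξ ^ (i * (q : ℤ) + i + j), ξ ^ (i * (q : ℤ) + j), (1 : ℂ)]}) := by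
  have h0 : ξ ≠ 0 := hξ.ne_zero (by omega)
  have key : ((d / Nat.gcd d (q + 1) : ℕ) : ℤ) ∣ i + j ↔
      ξ ^ (j * (q : ℤ)) * ξ ^ i * ξ ^ (i * (q : ℤ) + j) = 1 := by
    rw [aux_dvd d q hd, ← zpow_add₀ h0, ← zpow_add₀ h0, ← hξ.zpow_eq_one_iff_dvd]
    ring_nf
  have hbc : ξ ^ (i * (q : ℤ) + i + j) = ξ ^ i * ξ ^ (i * (q : ℤ) + j) := by
    rw [← zpow_add₀ h0]; ring_nf
  rw [key, hB, hbc]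
  generalize ξ ^ (j * (q : ℤ)) = a
  generalize ξ ^ i = b
  generalize ξ ^ (i * (q : ℤ) + j) = c
  simp only [aux_fix]
  refine ⟨⟨?_, fun h => ⟨![b * c, c, 1], fun h => ?_, ?_⟩⟩, fun h => ?_⟩
  · rintro ⟨v, hv, h1, h2, h3⟩
    have h4 : v 2 ≠ 0 := by
      intro h4
      apply hv
      have h5 : v 1 = 0 := by rw [← h2, h4, mul_zero]
      have h6 : v 0 = 0 := by rw [← h1, h5, mul_zero]
      ext k
      fin_cases k <;> simp [h4, h5, h6]
    apply mul_right_cancel₀ h4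
    linear_combination h3 + a * h1 + a * b * h2
  · simpa using congrFun h 2
  · refine ⟨by simp, by simp, ?_⟩
    simp only [Matrix.cons_val]
    linear_combination h
  · ext v
    rw [LinearMap.mem_ker, Matrix.toLin'_apply, Matrix.sub_mulVec, Matrix.one_mulVec,
      sub_eq_zero, aux_fix, Submodule.mem_span_singleton]
    constructor
    · rintro ⟨h1, h2, h3⟩
      refine ⟨v 2, ?_⟩
      ext k
      fin_cases k
      · simp [← h1, ← h2]; ring
      · simp [← h2]; ring
      · simp
    · rintro ⟨t, rfl⟩
      simp only [Pi.smul_apply, Matrix.cons_val, smul_eq_mul]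
      refine ⟨by ring, by ring, ?_⟩
      linear_combination t * h
end

section
/- Assume d divides q³ + 1 and let β = gcd(d, q² − q + 1). The set of scalar matrices contained in G_{d,q} equals { ξ^{qk(d/β)} · I₃ : k = 0, 1, …, β − 1 }; in particular the scalar matrices in G_{d,q} form a cyclic group of order β. -/
open Matrix

lemma idvd {a b c e : ℤ} (h : a ∣ b) (h1 : a = c) (h2 : b = e) : c ∣ e := by
  subst h1 h2; exact h

/-- the three monomial shapes -/
def monoShape (a b c : ℂ) : Fin 3 → Matrix (Fin 3) (Fin 3) ℂ :=
  ![!![a,0,0;0,b,0;0,0,c], !![0,a,0;0,0,b;c,0,0], !![0,0,a;b,0,0;0,c,0]]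

def MonoInv (d q : ℕ) (ξ : ℂ) (M : Matrix (Fin 3) (Fin 3) ℂ) : Prop :=
  ∃ x y z : ℤ, (d : ℤ) ∣ y - q * x + q ^ 2 * z ∧ ∃ j, M = monoShape (ξ ^ x) (ξ ^ y) (ξ ^ z) j

lemma monoInv_diag (d q : ℕ) (ξ : ℂ) (h0 : ξ ≠ 0) (M : Matrix (Fin 3) (Fin 3) ℂ)
    (h : MonoInv d q ξ M) (a b c : ℤ) (habc : (d : ℤ) ∣ b - q * a + q ^ 2 * c) :
    MonoInv d q ξ (Matrix.diagonal ![ξ ^ a, ξ ^ b, ξ ^ c] * M) := by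
  obtain ⟨x, y, z, hr, j, rfl⟩ := h
  refine ⟨a + x, b + y, c + z, ?_, j, ?_⟩
  · have := dvd_add hr habc
    exact idvd this rfl (by ring)
  · simp only [zpow_add₀ h0]
    fin_cases j <;> ext i k <;> fin_cases i <;> fin_cases k <;> simp [monoShape]

lemma monoInv_B (d q : ℕ) (hdvd : (d : ℤ) ∣ (q : ℤ) ^ 3 + 1) (ξ : ℂ)
    (M : Matrix (Fin 3) (Fin 3) ℂ)
    (h : MonoInv d q ξ M) :
    MonoInv d q ξ ((!![0,1,0; 0,0,1; 1,0,0] : Matrix (Fin 3) (Fin 3) ℂ) * M) := by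
  obtain ⟨x, y, z, hr, j, rfl⟩ := h
  refine ⟨y, z, x, ?_, j + 1, ?_⟩
  · have := dvd_sub (hdvd.mul_right z) (hr.mul_right q)
    exact idvd this rfl (by ring)
  · fin_cases j <;> ext i k <;> fin_cases i <;> fin_cases k <;>
      simp [monoShape, Matrix.mul_apply, Fin.sum_univ_three]

lemma scal_mem (q t : ℕ) (ξ : ℂ) (h0 : ξ ≠ 0)
    (ht : ξ ^ (t + q ^ 2 * t) = ξ ^ (q * t))
    (A B g : (Matrix (Fin 3) (Fin 3) ℂ)ˣ)
    (hA : (A : Matrix (Fin 3) (Fin 3) ℂ) = Matrix.diagonal ![1, ξ, ξ ^ q])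
    (hB : (B : Matrix (Fin 3) (Fin 3) ℂ) = !![0,1,0; 0,0,1; 1,0,0])
    (hBi : ((B⁻¹ : (Matrix (Fin 3) (Fin 3) ℂ)ˣ) : Matrix (Fin 3) (Fin 3) ℂ)
      = !![0,0,1; 1,0,0; 0,1,0])
    (hg : (g : Matrix (Fin 3) (Fin 3) ℂ) = ξ ^ t • (1 : Matrix (Fin 3) (Fin 3) ℂ)) :
    g ∈ Subgroup.closure {A, B} := by
  have mA : A ∈ Subgroup.closure {A, B} := Subgroup.subset_closure (by simp)
  have mB : B ∈ Subgroup.closure {A, B} := Subgroup.subset_closure (by simp)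
  have m1 := mul_mem (mul_mem mB mA) (inv_mem mB)
  have m2 := mul_mem (mul_mem (inv_mem mB) mA) mB
  have e1 : ((B * A * B⁻¹ : (Matrix (Fin 3) (Fin 3) ℂ)ˣ) : Matrix (Fin 3) (Fin 3) ℂ)
      = Matrix.diagonal ![ξ, ξ ^ q, 1] := by
    rw [Units.val_mul, Units.val_mul, hA, hB, hBi]
    ext i k; fin_cases i <;> fin_cases k <;> simp [Matrix.mul_apply, Fin.sum_univ_three, Matrix.vecMul_diagonal, Matrix.diagonal_apply]
  have e2 : ((B⁻¹ * A * B : (Matrix (Fin 3) (Fin 3) ℂ)ˣ) : Matrix (Fin 3) (Fin 3) ℂ)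
      = Matrix.diagonal ![ξ ^ q, 1, ξ] := by
    rw [Units.val_mul, Units.val_mul, hA, hB, hBi]
    ext i k; fin_cases i <;> fin_cases k <;> simp [Matrix.mul_apply, Fin.sum_univ_three, Matrix.vecMul_diagonal, Matrix.diagonal_apply]
  have key : g * (B * A * B⁻¹) ^ (q * t) = (B * A * B⁻¹) ^ t * (B⁻¹ * A * B) ^ t := by
    apply Units.ext
    rw [Units.val_mul, Units.val_mul, Units.val_pow_eq_pow_val, Units.val_pow_eq_pow_val,
      Units.val_pow_eq_pow_val, e1, e2, hg, Matrix.diagonal_pow, Matrix.diagonal_pow,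
      Matrix.diagonal_pow, Matrix.diagonal_mul_diagonal, smul_mul_assoc, one_mul,
      ← Matrix.diagonal_smul]
    congr 1
    funext i
    fin_cases i
    · simp [← pow_mul, mul_comm]
    · have : ξ ^ t * ξ ^ (q * (q * t)) = ξ ^ (q * t) := by
        rw [← ht, ← pow_add]; congr 1; ring
      simpa [← pow_mul] using this
    · simp
  rw [eq_mul_inv_of_mul_eq key]
  exact mul_mem (mul_mem (pow_mem m1 _) (pow_mem m2 _)) (inv_mem (pow_mem m1 _))

/-- Assume `d ∣ q³+1` and let `β = gcd(d, q²−q+1)`.  The set of scalar matrices in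
`G_{d,q}` equals `{ ξ^{qk(d/β)} · I₃ : k = 0, …, β−1 }`; in particular the scalar
matrices in `G_{d,q}` form a cyclic group of order `β`. -/
theorem stmt_12 (d q : ℕ) (hd : 1 ≤ d) (hq : q < d) (hdq : Nat.gcd d q = 1)
    (hdvd : d ∣ q ^ 3 + 1)
    (ξ : ℂ) (hξ : IsPrimitiveRoot ξ d)
    (A B : (Matrix (Fin 3) (Fin 3) ℂ)ˣ)
    (hA : (A : Matrix (Fin 3) (Fin 3) ℂ) = Matrix.diagonal ![1, ξ, ξ ^ q])
    (hB : (B : Matrix (Fin 3) (Fin 3) ℂ) = !![0,1,0; 0,0,1; 1,0,0]) :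
    {g : (Matrix (Fin 3) (Fin 3) ℂ)ˣ | g ∈ Subgroup.closure {A, B} ∧
        ∃ c : ℂ, (g : Matrix (Fin 3) (Fin 3) ℂ) = c • (1 : Matrix (Fin 3) (Fin 3) ℂ)} =
      {g : (Matrix (Fin 3) (Fin 3) ℂ)ˣ |
        ∃ k < Nat.gcd d (q ^ 2 - q + 1),
          (g : Matrix (Fin 3) (Fin 3) ℂ) =
            ξ ^ (q * k * (d / Nat.gcd d (q ^ 2 - q + 1))) •
              (1 : Matrix (Fin 3) (Fin 3) ℂ)} ∧
    {g : (Matrix (Fin 3) (Fin 3) ℂ)ˣ | g ∈ Subgroup.closure {A, B} ∧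
        ∃ c : ℂ, (g : Matrix (Fin 3) (Fin 3) ℂ) =
          c • (1 : Matrix (Fin 3) (Fin 3) ℂ)}.ncard = Nat.gcd d (q ^ 2 - q + 1) ∧
    ∃ g₀ ∈ {g : (Matrix (Fin 3) (Fin 3) ℂ)ˣ | g ∈ Subgroup.closure {A, B} ∧
        ∃ c : ℂ, (g : Matrix (Fin 3) (Fin 3) ℂ) = c • (1 : Matrix (Fin 3) (Fin 3) ℂ)},
      ∀ g ∈ {g : (Matrix (Fin 3) (Fin 3) ℂ)ˣ | g ∈ Subgroup.closure {A, B} ∧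
        ∃ c : ℂ, (g : Matrix (Fin 3) (Fin 3) ℂ) = c • (1 : Matrix (Fin 3) (Fin 3) ℂ)},
        ∃ n : ℕ, g = g₀ ^ n := by
  have h0 : ξ ≠ 0 := hξ.ne_zero (by omega)
  have hdz : (d : ℤ) ∣ (q : ℤ) ^ 3 + 1 := by exact_mod_cast hdvd
  have hBi : ((B⁻¹ : (Matrix (Fin 3) (Fin 3) ℂ)ˣ) : Matrix (Fin 3) (Fin 3) ℂ)
      = !![0,0,1; 1,0,0; 0,1,0] := by
    rw [Units.inv_eq_of_mul_eq_one_right]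
    rw [hB]
    ext i k; fin_cases i <;> fin_cases k <;> simp [Matrix.mul_apply, Fin.sum_univ_three]
  have hAi : ((A⁻¹ : (Matrix (Fin 3) (Fin 3) ℂ)ˣ) : Matrix (Fin 3) (Fin 3) ℂ)
      = Matrix.diagonal ![ξ ^ (0 : ℤ), ξ ^ (-1 : ℤ), ξ ^ (-q : ℤ)] := by
    rw [Units.inv_eq_of_mul_eq_one_right]
    rw [hA, Matrix.diagonal_mul_diagonal, ← Matrix.diagonal_one]
    congr 1
    funext i; fin_cases i <;> simp [h0]
  have hA' : (A : Matrix (Fin 3) (Fin 3) ℂ)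
      = Matrix.diagonal ![ξ ^ (0 : ℤ), ξ ^ (1 : ℤ), ξ ^ (q : ℤ)] := by
    rw [hA]; simp
  have inv : ∀ g ∈ Subgroup.closure {A, B}, MonoInv d q ξ (g : Matrix (Fin 3) (Fin 3) ℂ) := by
    intro g hg
    induction hg using Subgroup.closure_induction_left with
    | one =>
      refine ⟨0, 0, 0, by simp, 0, ?_⟩
      ext i k; fin_cases i <;> fin_cases k <;> simp [monoShape]
    | mul_left x hx y hy ih =>
      rw [Units.val_mul]
      rcases hx with rfl | rfl
      · rw [hA']
        refine monoInv_diag d q ξ h0 _ ih _ _ _ ?_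
        exact idvd hdz rfl (by ring)
      · rw [hB]; exact monoInv_B d q hdz ξ _ ih
    | inv_mul_cancel x hx y hy ih =>
      rw [Units.val_mul]
      rcases hx with rfl | rfl
      · rw [hAi]
        refine monoInv_diag d q ξ h0 _ ih _ _ _ ?_
        rw [← dvd_neg]
        exact idvd hdz rfl (by ring)
      · have : (!![0,0,1; 1,0,0; 0,1,0] : Matrix (Fin 3) (Fin 3) ℂ)
            = !![0,1,0; 0,0,1; 1,0,0] * !![0,1,0; 0,0,1; 1,0,0] := by
          ext i k; fin_cases i <;> fin_cases k <;> simp [Matrix.mul_apply, Fin.sum_univ_three]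
        rw [hBi, this, Matrix.mul_assoc]
        exact monoInv_B d q hdz ξ _ (monoInv_B d q hdz ξ _ ih)
  set m := q ^ 2 - q + 1 with hm
  have hmq : m + q = q ^ 2 + 1 := by
    have : q ≤ q ^ 2 := Nat.le_self_pow (by norm_num) q
    omega
  have hmz : (m : ℤ) = q ^ 2 - q + 1 := by
    have : (m : ℤ) + q = q ^ 2 + 1 := by exact_mod_cast hmq
    linarith
  clear_value m
  set β := Nat.gcd d m with hβ
  have hβ0 : 0 < β := Nat.gcd_pos_of_pos_left _ hd
  obtain ⟨d', hd'⟩ : β ∣ d := Nat.gcd_dvd_left _ _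
  obtain ⟨m', hm'⟩ : β ∣ m := Nat.gcd_dvd_right _ _
  have hcop : Nat.Coprime d' m' := by
    have : β * Nat.gcd d' m' = β * 1 := by
      rw [← Nat.gcd_mul_left, ← hd', ← hm', ← hβ, mul_one]
    exact Nat.eq_of_mul_eq_mul_left hβ0 this
  clear_value β
  have hdiv : d / β = d' := by rw [hd', Nat.mul_div_cancel_left _ hβ0]
  rw [hdiv]
  have hd'0 : d' ≠ 0 := by rintro rfl; omega
  set u : ℂˣ := Units.mk0 ξ h0 with hu
  set g₀ : (Matrix (Fin 3) (Fin 3) ℂ)ˣ :=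
    Units.map (algebraMap ℂ (Matrix (Fin 3) (Fin 3) ℂ)).toMonoidHom (u ^ (q * d')) with hg0
  have hg0k : ∀ k : ℕ, ((g₀ ^ k : (Matrix (Fin 3) (Fin 3) ℂ)ˣ) : Matrix (Fin 3) (Fin 3) ℂ)
      = ξ ^ (q * k * d') • (1 : Matrix (Fin 3) (Fin 3) ℂ) := by
    intro k
    rw [hg0, ← map_pow, ← pow_mul]
    have : q * d' * k = q * k * d' := by ring
    rw [this]
    simp [hu, Algebra.algebraMap_eq_smul_one, smul_pow]
  have hmem : ∀ k : ℕ, g₀ ^ k ∈ Subgroup.closure {A, B} := by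
    intro k
    refine scal_mem q (q * k * d') ξ h0 ?_ A B _ hA hB hBi (hg0k k)
    have : q * k * d' + q ^ 2 * (q * k * d') = q * (q * k * d') + d * (m' * q * k) := by
      have : q * k * d' + q ^ 2 * (q * k * d') = (q ^ 2 + 1) * (q * k * d') := by ring
      rw [this, ← hmq, hd', hm']; ring
    rw [this, pow_add, pow_mul ξ d, hξ.pow_eq_one, one_pow, mul_one]
  have hset : {g : (Matrix (Fin 3) (Fin 3) ℂ)ˣ | g ∈ Subgroup.closure {A, B} ∧
        ∃ c : ℂ, (g : Matrix (Fin 3) (Fin 3) ℂ) = c • (1 : Matrix (Fin 3) (Fin 3) ℂ)} =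
        (fun k : ℕ => g₀ ^ k) '' (Finset.range β : Set ℕ) := by
    ext g
    constructor
    · rintro ⟨hg, c, hc⟩
      obtain ⟨x, y, z, hr, j, hj⟩ := inv g hg
      rw [hc] at hj
      have hx0 := zpow_ne_zero x h0
      have hE : ∀ i k, (c • (1 : Matrix (Fin 3) (Fin 3) ℂ)) i k
        = monoShape (ξ ^ x) (ξ ^ y) (ξ ^ z) j i k := fun i k => by rw [hj]
      fin_cases j
      · have h1 := hE 0 0
        have h2 := hE 1 1
        have h3 := hE 2 2
        simp [monoShape] at h1 h2 h3
        have hyx : (d : ℤ) ∣ y - x := by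
          rw [← hξ.zpow_eq_one_iff_dvd, zpow_sub₀ h0, ← h1, ← h2, div_self (by rw [h1]; exact hx0)]
        have hzx : (d : ℤ) ∣ z - x := by
          rw [← hξ.zpow_eq_one_iff_dvd, zpow_sub₀ h0, ← h1, ← h3, div_self (by rw [h1]; exact hx0)]
        have hxm : (d : ℤ) ∣ x * m := by
          have := dvd_sub (dvd_sub hr hyx) (hzx.mul_right ((q : ℤ) ^ 2))
          exact idvd this rfl (by rw [hmz]; ring)
        have hd'x : (d' : ℤ) ∣ x := by
          have h5 : (β : ℤ) * d' ∣ β * (x * m') := by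
            refine idvd hxm ?_ ?_
            · rw [hd']; push_cast; ring
            · rw [hm']; push_cast; ring
          have h6 := Int.dvd_of_mul_dvd_mul_left (by exact_mod_cast hβ0.ne') h5
          exact IsCoprime.dvd_of_dvd_mul_right (Nat.isCoprime_iff_coprime.mpr hcop) h6
        obtain ⟨x', rfl⟩ := hd'x
        have hβz : (β : ℤ) ≠ 0 := by exact_mod_cast hβ0.ne'
        obtain ⟨k, hk⟩ := Int.eq_ofNat_of_zero_le (Int.emod_nonneg (-(q : ℤ) ^ 2 * x') hβz)
        have hkl := Int.emod_lt_of_pos (-(q : ℤ) ^ 2 * x') (b := (β : ℤ)) (by exact_mod_cast hβ0)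
        have hkβ : k < β := by rw [hk] at hkl; exact_mod_cast hkl
        refine ⟨k, by simpa using hkβ, ?_⟩
        apply Units.ext
        show ((g₀ ^ k : (Matrix (Fin 3) (Fin 3) ℂ)ˣ) : Matrix (Fin 3) (Fin 3) ℂ) = _
        rw [hg0k, hc, h1]
        congr 1
        have hdiff : (d : ℤ) ∣ ((q * k * d' : ℕ) : ℤ) - d' * x' := by
          have h7 : (β : ℤ) ∣ -(q : ℤ) ^ 2 * x' - k := by
            rw [← hk]; exact Int.dvd_self_sub_emod
          have h8 : (β : ℤ) ∣ (q : ℤ) ^ 3 + 1 := (Dvd.intro (d' : ℤ) (by exact_mod_cast hd'.symm)).trans hdz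
          have h9 : (β : ℤ) ∣ q * k - x' := by
            rw [← dvd_neg]
            have := dvd_add (h7.mul_left q) (h8.mul_right x')
            exact idvd this rfl (by ring)
          have := mul_dvd_mul_right h9 (d' : ℤ)
          refine idvd this ?_ ?_
          · rw [hd']; push_cast; ring
          · push_cast; ring
        rw [← hξ.zpow_eq_one_iff_dvd, zpow_sub₀ h0, div_eq_one_iff_eq (zpow_ne_zero _ h0),
          zpow_natCast] at hdiff
        exact hdiff
      · have h1 := hE 0 1
        simp [monoShape] at h1
        exact absurd h1.symm hx0
      · have h1 := hE 0 2
        simp [monoShape] at h1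
        exact absurd h1.symm hx0
    · rintro ⟨k, -, rfl⟩
      exact ⟨hmem k, _, hg0k k⟩
  refine ⟨?_, ?_, g₀, ?_, ?_⟩
  · rw [hset]
    ext g
    constructor
    · rintro ⟨k, hk, rfl⟩
      exact ⟨k, by simpa using hk, hg0k k⟩
    · rintro ⟨k, hk, h⟩
      exact ⟨k, by simpa using hk, Units.ext ((hg0k k).trans h.symm)⟩
  · rw [hset, Set.ncard_image_of_injOn, Set.ncard_coe_finset, Finset.card_range]
    intro k hk l hl hkl
    have hk : k < β := by simpa using hk
    have hl : l < β := by simpa using hl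
    have h1 := congrArg (fun g : (Matrix (Fin 3) (Fin 3) ℂ)ˣ =>
      (g : Matrix (Fin 3) (Fin 3) ℂ) 0 0) hkl
    simp only [hg0k] at h1
    simp at h1
    have h2 : (d : ℤ) ∣ ((q * k * d' : ℕ) : ℤ) - ((q * l * d' : ℕ) : ℤ) := by
      rw [← hξ.zpow_eq_one_iff_dvd, zpow_sub₀ h0, div_eq_one_iff_eq (zpow_ne_zero _ h0),
          zpow_natCast, zpow_natCast, h1]
    have h3 : (β : ℤ) * d' ∣ (q * ((k : ℤ) - l)) * d' := by
      refine idvd h2 ?_ ?_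
      · rw [hd']; push_cast; ring
      · push_cast; ring
    have h4 := Int.dvd_of_mul_dvd_mul_right (by exact_mod_cast hd'0) h3
    have h5 : IsCoprime (β : ℤ) (q : ℤ) :=
      Nat.isCoprime_iff_coprime.mpr (Nat.Coprime.coprime_dvd_left ⟨d', hd'⟩ hdq)
    have h6 := h5.dvd_of_dvd_mul_left h4
    have h7 := Int.eq_zero_of_abs_lt_dvd h6 (by rw [abs_lt]; constructor <;> omega)
    omega
  · have := hmem 1
    have h2 := hg0k 1
    rw [pow_one] at this h2
    exact ⟨this, _, h2⟩
  · rw [hset]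
    rintro g ⟨k, -, rfl⟩
    exact ⟨k, rfl⟩
end

section
/- Assume d divides q³ + 1 and let α = gcd(d, q+1). If a point P ∈ ℂ³ has a nontrivial stabilizer in G_{d,q} (i.e. there exists g ∈ G_{d,q}, g ≠ I₃, with gP = P), then there exists h ∈ G_{d,q} such that hP lies in L ∪ L₀ ∪ L₁ ∪ ⋯ ∪ L_{α−1}, where L = { (a, 0, 0) : a ∈ ℂ } and L_k = { (a, a, ξ^{k(d/α)} a) : a ∈ ℂ }. -/
open Matrix

lemma aux_pow (d q : ℕ) (hd : 1 ≤ d) (ξ : ℂ) (hξ : IsPrimitiveRoot ξ d) (e : ℤ)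
    (he : (d : ℤ) ∣ (q + 1) * e) :
    ∃ k < Nat.gcd d (q + 1), ξ ^ e = ξ ^ (k * (d / Nat.gcd d (q + 1))) := by
  have hα : 0 < Nat.gcd d (q + 1) := Nat.gcd_pos_of_pos_left _ hd
  obtain ⟨d', hd'⟩ := Nat.gcd_dvd_left d (q + 1)
  obtain ⟨r, hr⟩ := Nat.gcd_dvd_right d (q + 1)
  have hcop : Nat.Coprime (d / Nat.gcd d (q+1)) ((q+1) / Nat.gcd d (q+1)) :=
    Nat.coprime_div_gcd_div_gcd hα
  have e1 : d / Nat.gcd d (q+1) = d' := Nat.div_eq_of_eq_mul_right hα hd'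
  have e2 : (q+1) / Nat.gcd d (q+1) = r := Nat.div_eq_of_eq_mul_right hα hr
  rw [e1, e2] at hcop
  rw [e1]
  generalize Nat.gcd d (q+1) = α at *
  have hα' : (α : ℤ) ≠ 0 := by exact_mod_cast hα.ne'
  have h1 : (d' : ℤ) ∣ r * e := by
    have h2 : ((q : ℤ) + 1) = α * r := by exact_mod_cast hr
    have h3 : (d : ℤ) = α * d' := by exact_mod_cast hd'
    rw [h2, h3, mul_assoc] at he
    exact (mul_dvd_mul_iff_left hα').1 he
  have h2 : (d' : ℤ) ∣ e :=
    IsCoprime.dvd_of_dvd_mul_left (Nat.isCoprime_iff_coprime.2 hcop) h1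
  obtain ⟨m, rfl⟩ := h2
  have hm0 : 0 ≤ m % α := Int.emod_nonneg _ hα'
  have hm1 : m % α < α := Int.emod_lt_of_pos _ (by exact_mod_cast hα)
  refine ⟨(m % α).toNat, by omega, ?_⟩
  have hne : ξ ≠ 0 := hξ.ne_zero (by omega)
  rw [← _root_.zpow_natCast]
  push_cast
  rw [Int.toNat_of_nonneg hm0]
  have : (d' : ℤ) * m = d * (m / α) + (m % α) * d' := by
    have h3 : (d : ℤ) = α * d' := by exact_mod_cast hd'
    have := Int.emod_add_mul_ediv m α
    rw [h3]
    linear_combination (-(d' : ℤ)) * this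
  rw [this, zpow_add₀ hne, _root_.zpow_mul, _root_.zpow_natCast, hξ.pow_eq_one, _root_.one_zpow, one_mul]

def NF (d q : ℕ) (ξ : ℂ) (g : (Matrix (Fin 3) (Fin 3) ℂ)ˣ) : Prop :=
  ∃ a b c : ℤ, (d : ℤ) ∣ c + q ^ 2 * a - q * b ∧
    ((∀ P : Fin 3 → ℂ, g.1.mulVec P = ![ξ ^ a * P 0, ξ ^ b * P 1, ξ ^ c * P 2]) ∨
     (∀ P : Fin 3 → ℂ, g.1.mulVec P = ![ξ ^ a * P 1, ξ ^ b * P 2, ξ ^ c * P 0]) ∨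
     (∀ P : Fin 3 → ℂ, g.1.mulVec P = ![ξ ^ a * P 2, ξ ^ b * P 0, ξ ^ c * P 1]))

lemma inv_act (A : (Matrix (Fin 3) (Fin 3) ℂ)ˣ) (v w : Fin 3 → ℂ) (h : A.1.mulVec w = v) :
    (A⁻¹).1.mulVec v = w := by
  rw [← h, Matrix.mulVec_mulVec, ← Units.val_mul, inv_mul_cancel]
  simp

lemma NF_all (d q : ℕ) (hd : 1 ≤ d) (hdvd : d ∣ q ^ 3 + 1)
    (ξ : ℂ) (hne : ξ ≠ 0)
    (A B : (Matrix (Fin 3) (Fin 3) ℂ)ˣ)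
    (aA : ∀ P : Fin 3 → ℂ, A.1.mulVec P = ![P 0, ξ * P 1, ξ ^ q * P 2])
    (aA' : ∀ P : Fin 3 → ℂ, (A⁻¹).1.mulVec P = ![P 0, ξ⁻¹ * P 1, (ξ ^ q)⁻¹ * P 2])
    (aB : ∀ P : Fin 3 → ℂ, B.1.mulVec P = ![P 1, P 2, P 0])
    (aB' : ∀ P : Fin 3 → ℂ, (B⁻¹).1.mulVec P = ![P 2, P 0, P 1])
    (g : (Matrix (Fin 3) (Fin 3) ℂ)ˣ) (hg : g ∈ Subgroup.closure {A, B}) : NF d q ξ g := by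
  have hdz : (d : ℤ) ∣ q ^ 3 + 1 := by exact_mod_cast hdvd
  obtain ⟨w, hw⟩ := hdz
  induction hg using Subgroup.closure_induction_left with
  | one => exact ⟨0, 0, 0, by simp, Or.inl fun P => by ext i; fin_cases i <;> simp⟩
  | mul_left x hx y hy ih =>
    obtain ⟨a, b, c, ⟨z, hz⟩, h⟩ := ih
    rcases hx with rfl | rfl
    · refine ⟨a, b + 1, c + q, ⟨z, by linear_combination hz⟩, ?_⟩
      refine h.imp ?_ (Or.imp ?_ ?_) <;>
      · intro h P
        rw [Units.val_mul, ← Matrix.mulVec_mulVec, h, aA]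
        ext i; fin_cases i <;> simp [zpow_add₀ hne] <;> ring
    · refine ⟨b, c, a, ⟨w * a - q * z, by linear_combination a * hw - q * hz⟩, ?_⟩
      rcases h with h | h | h
      · refine Or.inr (Or.inl fun P => ?_)
        rw [Units.val_mul, ← Matrix.mulVec_mulVec, h, aB]; simp
      · refine Or.inr (Or.inr fun P => ?_)
        rw [Units.val_mul, ← Matrix.mulVec_mulVec, h, aB]; simp
      · refine Or.inl fun P => ?_
        rw [Units.val_mul, ← Matrix.mulVec_mulVec, h, aB]; simp
  | inv_mul_cancel x hx y hy ih =>
    obtain ⟨a, b, c, ⟨z, hz⟩, h⟩ := ih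
    rcases hx with rfl | rfl
    · refine ⟨a, b - 1, c - q, ⟨z, by linear_combination hz⟩, ?_⟩
      refine h.imp ?_ (Or.imp ?_ ?_) <;>
      · intro h P
        rw [Units.val_mul, ← Matrix.mulVec_mulVec, h, aA']
        ext i; fin_cases i <;> simp [zpow_sub₀ hne] <;> ring
    · refine ⟨c, a, b, ⟨q ^ 2 * z - w * (q * a - b), by
        linear_combination q ^ 2 * hz - (q * a - b) * hw⟩, ?_⟩
      rcases h with h | h | h
      · refine Or.inr (Or.inr fun P => ?_)
        rw [Units.val_mul, ← Matrix.mulVec_mulVec, h, aB']; simp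
      · refine Or.inl fun P => ?_
        rw [Units.val_mul, ← Matrix.mulVec_mulVec, h, aB']; simp
      · refine Or.inr (Or.inl fun P => ?_)
        rw [Units.val_mul, ← Matrix.mulVec_mulVec, h, aB']; simp

/-- Assume `d ∣ q³+1` and let `α = gcd(d, q+1)`.  If a point `P ∈ ℂ³` has a nontrivial
stabilizer in `G_{d,q}`, then some `h ∈ G_{d,q}` moves `P` into
`L ∪ L₀ ∪ ⋯ ∪ L_{α−1}`, where `L = {(a,0,0)}` and `L_k = {(a, a, ξ^{k(d/α)} a)}`. -/
theorem stmt_13 (d q : ℕ) (hd : 1 ≤ d) (hq : q < d) (hdq : Nat.gcd d q = 1)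
    (hdvd : d ∣ q ^ 3 + 1)
    (ξ : ℂ) (hξ : IsPrimitiveRoot ξ d)
    (A B : (Matrix (Fin 3) (Fin 3) ℂ)ˣ)
    (hA : (A : Matrix (Fin 3) (Fin 3) ℂ) = Matrix.diagonal ![1, ξ, ξ ^ q])
    (hB : (B : Matrix (Fin 3) (Fin 3) ℂ) = !![0,1,0; 0,0,1; 1,0,0])
    (P : Fin 3 → ℂ)
    (hP : ∃ g ∈ Subgroup.closure {A, B}, g ≠ 1 ∧
      (g : Matrix (Fin 3) (Fin 3) ℂ).mulVec P = P) :
    ∃ h ∈ Subgroup.closure {A, B},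
      (∃ a : ℂ, (h : Matrix (Fin 3) (Fin 3) ℂ).mulVec P = ![a, 0, 0]) ∨
      ∃ k < Nat.gcd d (q + 1), ∃ a : ℂ,
        (h : Matrix (Fin 3) (Fin 3) ℂ).mulVec P =
          ![a, a, ξ ^ (k * (d / Nat.gcd d (q + 1))) * a] := by
  have hne : ξ ≠ 0 := hξ.ne_zero (by omega)
  have aA : ∀ P : Fin 3 → ℂ, A.1.mulVec P = ![P 0, ξ * P 1, ξ ^ q * P 2] := by
    intro P
    rw [hA]; ext i; rw [Matrix.mulVec_diagonal]; fin_cases i <;> simp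
  have aA' : ∀ P : Fin 3 → ℂ, (A⁻¹).1.mulVec P = ![P 0, ξ⁻¹ * P 1, (ξ ^ q)⁻¹ * P 2] := by
    intro P
    apply inv_act
    rw [aA]; ext i; fin_cases i <;> simp [hne]
  have aB : ∀ P : Fin 3 → ℂ, B.1.mulVec P = ![P 1, P 2, P 0] := by
    intro P
    rw [hB]; ext i; fin_cases i <;> simp [Matrix.mulVec, dotProduct, Fin.sum_univ_three]
  have aB' : ∀ P : Fin 3 → ℂ, (B⁻¹).1.mulVec P = ![P 2, P 0, P 1] := by
    intro P
    apply inv_act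
    rw [aB]; ext i; fin_cases i <;> simp
  have mA : A ∈ Subgroup.closure {A, B} := Subgroup.subset_closure (by simp)
  have mB : B ∈ Subgroup.closure {A, B} := Subgroup.subset_closure (by simp)
  have aAn : ∀ (n : ℤ) (P : Fin 3 → ℂ),
      (A ^ n).1.mulVec P = ![P 0, ξ ^ n * P 1, ξ ^ (q * n) * P 2] := by
    intro n
    induction n using Int.induction_on with
    | zero => intro P; ext i; fin_cases i <;> simp
    | succ n ih =>
      intro P
      rw [_root_.zpow_add_one, Units.val_mul, ← Matrix.mulVec_mulVec, aA, ih]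
      ext i; fin_cases i <;> simp [zpow_add₀ hne, mul_add] <;> ring
    | pred n ih =>
      intro P
      rw [_root_.zpow_sub_one, Units.val_mul, ← Matrix.mulVec_mulVec, aA', ih]
      ext i; fin_cases i <;> simp [zpow_sub₀ hne, mul_sub] <;> ring
  have hdz : (d : ℤ) ∣ q ^ 3 + 1 := by exact_mod_cast hdvd
  obtain ⟨w, hw⟩ := hdz
  -- two vanishing coordinates
  have z12 : P 1 = 0 → P 2 = 0 → ∃ h ∈ Subgroup.closure {A, B},
      (∃ a : ℂ, (h : Matrix (Fin 3) (Fin 3) ℂ).mulVec P = ![a, 0, 0]) := by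
    intro h1 h2
    refine ⟨1, one_mem _, P 0, ?_⟩
    ext i; fin_cases i <;> simp [h1, h2]
  have z02 : P 0 = 0 → P 2 = 0 → ∃ h ∈ Subgroup.closure {A, B},
      (∃ a : ℂ, (h : Matrix (Fin 3) (Fin 3) ℂ).mulVec P = ![a, 0, 0]) := by
    intro h1 h2
    refine ⟨B, mB, P 1, ?_⟩
    rw [aB, h1, h2]
  have z01 : P 0 = 0 → P 1 = 0 → ∃ h ∈ Subgroup.closure {A, B},
      (∃ a : ℂ, (h : Matrix (Fin 3) (Fin 3) ℂ).mulVec P = ![a, 0, 0]) := by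
    intro h1 h2
    refine ⟨B⁻¹, inv_mem mB, P 2, ?_⟩
    rw [aB', h1, h2]
  have fin1 : (∃ h ∈ Subgroup.closure {A, B},
      (∃ a : ℂ, (h : Matrix (Fin 3) (Fin 3) ℂ).mulVec P = ![a, 0, 0])) →
      ∃ h ∈ Subgroup.closure {A, B},
      (∃ a : ℂ, (h : Matrix (Fin 3) (Fin 3) ℂ).mulVec P = ![a, 0, 0]) ∨
      ∃ k < Nat.gcd d (q + 1), ∃ a : ℂ,
        (h : Matrix (Fin 3) (Fin 3) ℂ).mulVec P =
          ![a, a, ξ ^ (k * (d / Nat.gcd d (q + 1))) * a] :=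
    fun ⟨h, hh, h'⟩ => ⟨h, hh, Or.inl h'⟩
  -- final step for the non-diagonal cases
  have fin2 : ∀ s e : ℤ, (d : ℤ) ∣ (q + 1) * e → ξ ^ s * P 1 = P 0 →
      ξ ^ (q * s) * P 2 = ξ ^ e * P 0 →
      ∃ h ∈ Subgroup.closure {A, B},
      (∃ a : ℂ, (h : Matrix (Fin 3) (Fin 3) ℂ).mulVec P = ![a, 0, 0]) ∨
      ∃ k < Nat.gcd d (q + 1), ∃ a : ℂ,
        (h : Matrix (Fin 3) (Fin 3) ℂ).mulVec P =
          ![a, a, ξ ^ (k * (d / Nat.gcd d (q + 1))) * a] := by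
    intro s e he h1 h2
    obtain ⟨k, hk, hke⟩ := aux_pow d q hd ξ hξ e he
    refine ⟨A ^ s, zpow_mem mA s, Or.inr ⟨k, hk, P 0, ?_⟩⟩
    rw [aAn, h1, h2, hke]
  obtain ⟨g, hg, hg1, hgP⟩ := hP
  obtain ⟨a, b, c, ⟨z, hz⟩, h⟩ := NF_all d q hd hdvd ξ hne A B aA aA' aB aB' g hg
  rcases h with h | h | h
  · rw [h] at hgP
    have p0 : ξ ^ a * P 0 = P 0 := by simpa using congrFun hgP 0
    have p1 : ξ ^ b * P 1 = P 1 := by simpa using congrFun hgP 1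
    have p2 : ξ ^ c * P 2 = P 2 := by simpa using congrFun hgP 2
    have key : ∀ (n : ℤ) (x : ℂ), ξ ^ n * x = x → x ≠ 0 → (d : ℤ) ∣ n := fun n x hx hx0 =>
      (hξ.zpow_eq_one_iff_dvd n).1 (mul_right_cancel₀ hx0 (by rw [hx, one_mul]))
    have contra : (d : ℤ) ∣ a → (d : ℤ) ∣ b → (d : ℤ) ∣ c → False := by
      intro ha hb hc
      apply hg1
      have ha := (hξ.zpow_eq_one_iff_dvd _).2 ha
      have hb := (hξ.zpow_eq_one_iff_dvd _).2 hb
      have hc := (hξ.zpow_eq_one_iff_dvd _).2 hc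
      apply Units.ext
      apply Matrix.mulVec_injective
      funext Q
      rw [h, ha, hb, hc]
      ext i; fin_cases i <;> simp
    by_cases h0 : P 0 = 0
    · by_cases h1 : P 1 = 0
      · exact fin1 (z01 h0 h1)
      · by_cases h2 : P 2 = 0
        · exact fin1 (z02 h0 h2)
        · obtain ⟨b', hb⟩ := key _ _ p1 h1
          obtain ⟨c', hc⟩ := key _ _ p2 h2
          exact (contra ⟨w * a - q * z + q * c' - q ^ 2 * b', by
            linear_combination a * hw - q * hz + q * hc - q ^ 2 * hb⟩ ⟨b', hb⟩ ⟨c', hc⟩).elim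
    · by_cases h1 : P 1 = 0
      · by_cases h2 : P 2 = 0
        · exact fin1 (z12 h1 h2)
        · obtain ⟨a', ha⟩ := key _ _ p0 h0
          obtain ⟨c', hc⟩ := key _ _ p2 h2
          exact (contra ⟨a', ha⟩ ⟨q ^ 2 * z - w * (q * a - b) + q * a' - q ^ 2 * c', by
            linear_combination q ^ 2 * hz - (q * a - b) * hw + q * ha - q ^ 2 * hc⟩
            ⟨c', hc⟩).elim
      · obtain ⟨a', ha⟩ := key _ _ p0 h0
        obtain ⟨b', hb⟩ := key _ _ p1 h1
        exact (contra ⟨a', ha⟩ ⟨b', hb⟩ ⟨z + q * b' - q ^ 2 * a', by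
          linear_combination hz + q * hb - q ^ 2 * ha⟩).elim
  · rw [h] at hgP
    have p0 : ξ ^ a * P 1 = P 0 := by simpa using congrFun hgP 0
    have p1 : ξ ^ b * P 2 = P 1 := by simpa using congrFun hgP 1
    have p2 : ξ ^ c * P 0 = P 2 := by simpa using congrFun hgP 2
    by_cases h0 : P 0 = 0
    · have h2 : P 2 = 0 := by rw [← p2, h0, mul_zero]
      exact fin1 (z02 h0 h2)
    have hs : (d : ℤ) ∣ a + b + c := by
      apply (hξ.zpow_eq_one_iff_dvd _).1
      apply mul_right_cancel₀ h0
      rw [zpow_add₀ hne, zpow_add₀ hne, mul_assoc, p2, mul_assoc, p1, p0, one_mul]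
    obtain ⟨y, hy⟩ := hs
    refine fin2 a (c + q * a) ⟨z + q * y, by linear_combination hz + q * hy⟩ p0 ?_
    rw [zpow_add₀ hne, ← p2]; ring
  · rw [h] at hgP
    have p0 : ξ ^ a * P 2 = P 0 := by simpa using congrFun hgP 0
    have p1 : ξ ^ b * P 0 = P 1 := by simpa using congrFun hgP 1
    have p2 : ξ ^ c * P 1 = P 2 := by simpa using congrFun hgP 2
    by_cases h0 : P 0 = 0
    · have h1 : P 1 = 0 := by rw [← p1, h0, mul_zero]
      exact fin1 (z01 h0 h1)
    have hs : (d : ℤ) ∣ a + c + b := by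
      apply (hξ.zpow_eq_one_iff_dvd _).1
      apply mul_right_cancel₀ h0
      rw [zpow_add₀ hne, zpow_add₀ hne, mul_assoc, p1, mul_assoc, p2, p0, one_mul]
    obtain ⟨y, hy⟩ := hs
    refine fin2 (-b) (-a - q * b) ⟨q * z - q * y - w * a, by
      linear_combination q * hz - q * hy - a * hw⟩ ?_ ?_
    · rw [← p1, ← mul_assoc, ← zpow_add₀ hne]; simp
    · rw [← p0, ← mul_assoc, ← zpow_add₀ hne]; congr 2; ring
end

section
/- Assume d divides q³ + 1, let α = gcd(d, q+1) and γ = gcd(3, gcd(d, (q³+1)/d)). For all integers k, k', the G_{d,q}-orbits of the lines L_k and L_{k'} coincide (i.e. { g·P : g ∈ G_{d,q}, P ∈ L_k } = { g·P : g ∈ G_{d,q}, P ∈ L_{k'} } as subsets of ℂ³) if and only if k ≡ k' (mod γ). -/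
open Matrix

lemma nt_key (d q : ℕ) (hd : 1 ≤ d) (hdvd : d ∣ q ^ 3 + 1) (K : ℤ) :
    (∃ t : ℤ, (d : ℤ) ∣ K * ((d / Nat.gcd d (q + 1) : ℕ) : ℤ) + t * ((q : ℤ) ^ 2 - q + 1)) ↔
      ((Nat.gcd 3 (Nat.gcd d ((q ^ 3 + 1) / d)) : ℤ)) ∣ K := by
  obtain ⟨m, r, hcop, hm, hr⟩ := Nat.exists_coprime d (q + 1)
  have hα : 0 < Nat.gcd d (q + 1) := Nat.gcd_pos_of_pos_left _ hd
  generalize Nat.gcd d (q + 1) = α at *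
  have hdm : d / α = m := by
    conv_lhs => rw [hm]
    exact Nat.mul_div_cancel _ hα
  rw [hdm]
  have hαz : (α : ℤ) ≠ 0 := by exact_mod_cast hα.ne'
  have hmpos : 0 < m := Nat.pos_of_ne_zero (by rintro rfl; omega)
  have hmz : (m : ℤ) ≠ 0 := by exact_mod_cast hmpos.ne'
  have hmZ : (d : ℤ) = m * α := by exact_mod_cast hm
  have hrZ : (q : ℤ) + 1 = r * α := by exact_mod_cast hr
  have hcZ : IsCoprime (m : ℤ) (r : ℤ) := Nat.isCoprime_iff_coprime.mpr hcop
  have h1 : (m : ℤ) ∣ (q : ℤ) ^ 2 - q + 1 := by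
    have h : (d : ℤ) ∣ (q : ℤ) ^ 3 + 1 := by exact_mod_cast hdvd
    have e : (q : ℤ) ^ 3 + 1 = (r * ((q : ℤ) ^ 2 - q + 1)) * α := by
      linear_combination ((q : ℤ) ^ 2 - q + 1) * hrZ
    rw [hmZ, e] at h
    exact hcZ.dvd_of_dvd_mul_left ((mul_dvd_mul_iff_right hαz).mp h)
  obtain ⟨n, hn⟩ := h1
  have hnpos : 0 ≤ n := by
    by_contra hneg
    push Not at hneg
    have : (0 : ℤ) < m := by exact_mod_cast hmpos
    nlinarith [sq_nonneg ((q : ℤ) - 1)]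
  lift n to ℕ using hnpos
  have hquot : (q ^ 3 + 1) / d = n * r := by
    apply Nat.div_eq_of_eq_mul_right hd
    zify
    rw [hmZ]
    linear_combination ((q : ℤ) ^ 2 - q + 1) * hrZ + r * α * hn
  rw [hquot]
  have hγ : Nat.gcd 3 (Nat.gcd d (n * r)) = Nat.gcd n α := by
    apply Nat.dvd_antisymm
    · rcases (Nat.dvd_prime Nat.prime_three).mp (Nat.gcd_dvd_left 3 (Nat.gcd d (n * r))) with h | h
      · rw [h]; exact one_dvd _
      · rw [h]
        have h2 : 3 ∣ Nat.gcd d (n * r) := by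
          rw [← h]; exact Nat.gcd_dvd_right _ _
        have h3d : 3 ∣ d := h2.trans (Nat.gcd_dvd_left _ _)
        have h3n : 3 ∣ n * r := h2.trans (Nat.gcd_dvd_right _ _)
        have h3q : 3 ∣ q ^ 3 + 1 := h3d.trans hdvd
        have hq3 : 3 ∣ q + 1 := by
          have : q % 3 = 0 ∨ q % 3 = 1 ∨ q % 3 = 2 := by omega
          rcases this with h | h | h
          · have := Nat.mod_eq_zero_of_dvd h3q
            simp [Nat.add_mod, Nat.pow_mod, h] at this
          · have := Nat.mod_eq_zero_of_dvd h3q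
            simp [Nat.add_mod, Nat.pow_mod, h] at this
          · omega
        have hN : 3 ∣ m * n := by
          have : (3 : ℤ) ∣ m * n := by
            rw [← hn]
            have h' : (3 : ℤ) ∣ (q : ℤ) + 1 := by exact_mod_cast hq3
            obtain ⟨c, hc⟩ := h'
            exact ⟨c * (q - 2) + 1, by linear_combination ((q : ℤ) - 2) * hc⟩
          exact_mod_cast this
        have hnot : ¬ (3 ∣ m ∧ 3 ∣ r) := by
          rintro ⟨a, b⟩
          have := Nat.dvd_gcd a b
          rw [hcop] at this
          omega
        rw [hm, Nat.prime_three.dvd_mul] at h3d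
        rw [hr, Nat.prime_three.dvd_mul] at hq3
        rw [Nat.prime_three.dvd_mul] at hN h3n
        exact Nat.dvd_gcd (by tauto) (by tauto)
    · have a1 : Nat.gcd n α ∣ n := Nat.gcd_dvd_left _ _
      have a2 : Nat.gcd n α ∣ α := Nat.gcd_dvd_right _ _
      refine Nat.dvd_gcd ?_ (Nat.dvd_gcd (hm ▸ a2.mul_left m) (a1.mul_right r))
      zify at a1 a2 ⊢
      have : (3 : ℤ) = m * n - (r * α) * (q - 2) := by
        linear_combination hn - ((q : ℤ) - 2) * hrZ
      rw [this]
      exact dvd_sub (a1.mul_left _) ((a2.mul_left _).mul_right _)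
  rw [hγ]
  have key : ∀ t : ℤ, (d : ℤ) ∣ K * (m : ℤ) + t * ((q : ℤ) ^ 2 - q + 1) ↔ (α : ℤ) ∣ K + t * n := by
    intro t
    rw [hn, hmZ, show K * (m : ℤ) + t * (m * n) = m * (K + t * n) by ring,
      mul_dvd_mul_iff_left hmz]
  simp only [key]
  constructor
  · rintro ⟨t, ht⟩
    have a1 : ((Nat.gcd n α : ℕ) : ℤ) ∣ n := by exact_mod_cast Nat.gcd_dvd_left _ _
    have a2 : ((Nat.gcd n α : ℕ) : ℤ) ∣ α := by exact_mod_cast Nat.gcd_dvd_right _ _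
    exact (dvd_add_left (a1.mul_left t)).mp (a2.trans ht)
  · rintro ⟨c, hc⟩
    refine ⟨-c * Nat.gcdA n α, c * Nat.gcdB n α, ?_⟩
    rw [hc, Nat.gcd_eq_gcd_ab]
    ring

def Acts (ξ : ℂ) (g : (Matrix (Fin 3) (Fin 3) ℂ)ˣ) (e : Fin 3 → ℤ) (s : Fin 3) : Prop :=
  ∀ (v : Fin 3 → ℂ) (i : Fin 3),
    (g : Matrix (Fin 3) (Fin 3) ℂ).mulVec v i = ξ ^ (e i) * v (i + s)

lemma Acts.mul {ξ : ℂ} (h0 : ξ ≠ 0) {g g' : (Matrix (Fin 3) (Fin 3) ℂ)ˣ} {e e' : Fin 3 → ℤ}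
    {s s' : Fin 3} (h : Acts ξ g e s) (h' : Acts ξ g' e' s') :
    Acts ξ (g * g') (fun i => e i + e' (i + s)) (s + s') := by
  intro v i
  rw [Units.val_mul, ← Matrix.mulVec_mulVec, h, h', zpow_add₀ h0, mul_assoc, add_assoc]

lemma Acts.inv {ξ : ℂ} (h0 : ξ ≠ 0) {g : (Matrix (Fin 3) (Fin 3) ℂ)ˣ} {e : Fin 3 → ℤ}
    {s : Fin 3} (h : Acts ξ g e s) :
    Acts ξ g⁻¹ (fun i => - e (i + -s)) (-s) := by
  intro v i
  have := h ((g⁻¹ : (Matrix (Fin 3) (Fin 3) ℂ)ˣ).val.mulVec v) (i + -s)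
  rw [Matrix.mulVec_mulVec, ← Units.val_mul, mul_inv_cancel, Units.val_one, Matrix.one_mulVec,
    neg_add_cancel_right] at this
  rw [this, ← mul_assoc, ← zpow_add₀ h0]
  simp

lemma f_shift (d q : ℕ) (hdvd : d ∣ q ^ 3 + 1) (e : Fin 3 → ℤ) (s : Fin 3)
    (h : (d : ℤ) ∣ e 2 - q * e 1 + q ^ 2 * e 0) :
    (d : ℤ) ∣ e (2 + s) - q * e (1 + s) + q ^ 2 * e (0 + s) := by
  obtain ⟨c, hc⟩ : (d : ℤ) ∣ (q : ℤ) ^ 3 + 1 := by exact_mod_cast hdvd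
  obtain ⟨b, hb⟩ := h
  fin_cases s
  · exact ⟨b, hb⟩
  · change (d : ℤ) ∣ e 0 - q * e 2 + q ^ 2 * e 1
    exact ⟨c * e 0 - q * b, by linear_combination e 0 * hc - q * hb⟩
  · change (d : ℤ) ∣ e 1 - q * e 0 + q ^ 2 * e 2
    exact ⟨c * (e 1 - q * e 0) + q ^ 2 * b, by
      linear_combination (e 1 - q * e 0) * hc + q ^ 2 * hb⟩

section
variable (d q : ℕ) (hd : 1 ≤ d) (hdvd : d ∣ q ^ 3 + 1)
    (ξ : ℂ) (hξ : IsPrimitiveRoot ξ d)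
    (A B : (Matrix (Fin 3) (Fin 3) ℂ)ˣ)
    (hA : (A : Matrix (Fin 3) (Fin 3) ℂ) = Matrix.diagonal ![1, ξ, ξ ^ q])
    (hB : (B : Matrix (Fin 3) (Fin 3) ℂ) = !![0,1,0; 0,0,1; 1,0,0])

include hA in
lemma acts_A : Acts ξ A ![0, 1, q] 0 := by
  intro v i
  rw [hA, Matrix.mulVec_diagonal]
  fin_cases i <;> simp

include hB in
lemma acts_B : Acts ξ B 0 1 := by
  intro v i
  rw [hB]
  fin_cases i <;> simp [Matrix.mulVec, dotProduct, Fin.sum_univ_three]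

include hd hdvd hξ hA hB in
lemma acts_of_mem (g : (Matrix (Fin 3) (Fin 3) ℂ)ˣ) (hg : g ∈ Subgroup.closure {A, B}) :
    ∃ e s, (d : ℤ) ∣ e 2 - q * e 1 + q ^ 2 * e 0 ∧ Acts ξ g e s := by
  have h0 : ξ ≠ 0 := hξ.ne_zero (by omega)
  induction hg using Subgroup.closure_induction with
  | mem x hx =>
    rcases hx with rfl | rfl
    · exact ⟨_, _, by simp, acts_A q ξ x hA⟩
    · exact ⟨_, _, by simp, acts_B ξ x hB⟩
  | one => exact ⟨0, 0, by simp, fun v i => by simp⟩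
  | mul x y _ _ hx hy =>
    obtain ⟨e, s, h, ha⟩ := hx
    obtain ⟨e', s', h', ha'⟩ := hy
    refine ⟨_, _, ?_, ha.mul h0 ha'⟩
    obtain ⟨c, hc⟩ := dvd_add h (f_shift d q hdvd e' s h')
    exact ⟨c, by linear_combination hc⟩
  | inv x _ hx =>
    obtain ⟨e, s, h, ha⟩ := hx
    refine ⟨_, _, ?_, ha.inv h0⟩
    obtain ⟨c, hc⟩ := f_shift d q hdvd e (-s) h
    exact ⟨-c, by linear_combination -hc⟩

include hd hξ hA hB in
lemma mem_of_acts (e : Fin 3 → ℤ) (he : (d : ℤ) ∣ e 2 - q * e 1 + q ^ 2 * e 0) :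
    ∃ g ∈ Subgroup.closure {A, B}, Acts ξ g e 0 := by
  have h0 : ξ ≠ 0 := hξ.ne_zero (by omega)
  let D : AddSubgroup (Fin 3 → ℤ) :=
    { carrier := {e | ∃ g ∈ Subgroup.closure {A, B}, Acts ξ g e 0}
      zero_mem' := ⟨1, one_mem _, fun v i => by simp⟩
      add_mem' := by
        rintro a b ⟨g, hg, h⟩ ⟨g', hg', h'⟩
        refine ⟨g * g', mul_mem hg hg', ?_⟩
        have := h.mul h0 h'
        simp only [add_zero] at this
        exact this
      neg_mem' := by
        rintro a ⟨g, hg, h⟩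
        refine ⟨g⁻¹, inv_mem hg, ?_⟩
        have := h.inv h0
        simp only [neg_zero, add_zero] at this
        exact this }
  have mA : A ∈ Subgroup.closure {A, B} := Subgroup.subset_closure (by simp)
  have mB : B ∈ Subgroup.closure {A, B} := Subgroup.subset_closure (by simp)
  have hu : ![0, 1, (q : ℤ)] ∈ D := ⟨A, mA, acts_A q ξ A hA⟩
  have hv : ![1, (q : ℤ), 0] ∈ D := by
    refine ⟨B * A * B⁻¹, mul_mem (mul_mem mB mA) (inv_mem mB), ?_⟩
    have := ((acts_B ξ B hB).mul h0 (acts_A q ξ A hA)).mul h0 ((acts_B ξ B hB).inv h0)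
    convert this using 1
    · ext i
      fin_cases i <;> simp <;> rfl
    · rfl
  have hw : e - ((e 1 - q * e 0) • ![0, 1, (q : ℤ)] + (e 0) • ![1, (q : ℤ), 0]) ∈ D := by
    refine ⟨1, one_mem _, fun v i => ?_⟩
    have : ξ ^ (e 2 - (e 1 - q * e 0) * q) = 1 := by
      rw [hξ.zpow_eq_one_iff_dvd]
      convert he using 1
      ring
    fin_cases i
    · simp
    · simp [mul_comm]
    · simp [this]
  have := D.add_mem hw (D.add_mem (D.zsmul_mem hu (e 1 - q * e 0)) (D.zsmul_mem hv (e 0)))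
  rw [sub_add_cancel] at this
  exact this

include hd hξ hA hB in
lemma orbit_sub (x y t : ℤ) (h : (d : ℤ) ∣ (y - x) + t * ((q : ℤ) ^ 2 - q + 1)) :
    {z : Fin 3 → ℂ | ∃ g ∈ Subgroup.closure {A, B}, ∃ a : ℂ,
        z = (g : Matrix (Fin 3) (Fin 3) ℂ).mulVec ![a, a, ξ ^ x * a]} ⊆
    {z : Fin 3 → ℂ | ∃ g ∈ Subgroup.closure {A, B}, ∃ a : ℂ,
        z = (g : Matrix (Fin 3) (Fin 3) ℂ).mulVec ![a, a, ξ ^ y * a]} := by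
  have h0 : ξ ≠ 0 := hξ.ne_zero (by omega)
  rintro z ⟨g, hg, a, rfl⟩
  obtain ⟨p, hp, hact⟩ := mem_of_acts d q hd ξ hξ A B hA hB ![t, t, y - x + t] (by
    convert h using 1
    simp
    ring)
  refine ⟨g * p⁻¹, mul_mem hg (inv_mem hp), ξ ^ t * a, ?_⟩
  have : ![ξ ^ t * a, ξ ^ t * a, ξ ^ y * (ξ ^ t * a)] =
      (p : Matrix (Fin 3) (Fin 3) ℂ).mulVec ![a, a, ξ ^ x * a] := by
    ext i
    rw [hact]
    fin_cases i
    · simp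
    · simp
    · simp [zpow_add₀ h0, zpow_sub₀ h0]
      field_simp
  rw [this, Matrix.mulVec_mulVec, ← Units.val_mul, inv_mul_cancel_right]

include hd hdvd hξ hA hB in
lemma orbit_conv (x y : ℤ) (hx : (d : ℤ) ∣ (q + 1) * x)
    (h : ![1, 1, ξ ^ y] ∈ {z : Fin 3 → ℂ | ∃ g ∈ Subgroup.closure {A, B}, ∃ a : ℂ,
        z = (g : Matrix (Fin 3) (Fin 3) ℂ).mulVec ![a, a, ξ ^ x * a]}) :
    ∃ t : ℤ, (d : ℤ) ∣ (y - x) + t * ((q : ℤ) ^ 2 - q + 1) := by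
  have h0 : ξ ≠ 0 := hξ.ne_zero (by omega)
  obtain ⟨g, hg, a, hz⟩ := h
  obtain ⟨e, s, he, hact⟩ := acts_of_mem d q hd hdvd ξ hξ A B hA hB g hg
  have E : ∀ i, (![1, 1, ξ ^ y] : Fin 3 → ℂ) i = ξ ^ e i * (![a, a, ξ ^ x * a] : Fin 3 → ℂ) (i + s) := by
    intro i; rw [hz]; exact hact _ i
  have inj : ∀ i j : ℤ, ξ ^ i = ξ ^ j → (d : ℤ) ∣ i - j := by
    intro i j hij
    rw [← hξ.zpow_eq_one_iff_dvd, zpow_sub₀ h0, hij, div_self (zpow_ne_zero _ h0)]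
  obtain ⟨t, rfl⟩ : ∃ t : ℤ, a = ξ ^ t := by
    have e0 := E 0
    have e1 := E 1
    have aux : ∀ n : ℤ, 1 = ξ ^ n * a → ∃ t : ℤ, a = ξ ^ t := fun n hn =>
      ⟨-n, by rw [_root_.zpow_neg]; exact (inv_eq_of_mul_eq_one_right hn.symm).symm⟩
    fin_cases s
    · exact aux _ e0
    · exact aux _ e0
    · exact aux _ e1
  have E' : ∀ i, (d : ℤ) ∣ (![0, 0, y] : Fin 3 → ℤ) i - (e i + (![t, t, x + t] : Fin 3 → ℤ) (i + s)) := by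
    intro i
    apply inj
    have := E i
    rw [zpow_add₀ h0]
    convert this using 1
    · fin_cases i <;> simp
    · congr 1
      generalize i + s = j
      fin_cases j <;> simp [zpow_add₀ h0]
  obtain ⟨c0, h0'⟩ := E' 0
  obtain ⟨c1, h1'⟩ := E' 1
  obtain ⟨c2, h2'⟩ := E' 2
  obtain ⟨b, hb⟩ := he
  obtain ⟨c, hc⟩ := hx
  refine ⟨-t, ?_⟩
  fin_cases s
  · change 0 - (e 0 + t) = _ at h0'
    change 0 - (e 1 + t) = _ at h1'
    change y - (e 2 + (x + t)) = _ at h2'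
    exact ⟨c2 - q * c1 + q ^ 2 * c0 + b, by linear_combination h2' - q * h1' + q ^ 2 * h0' + hb⟩
  · change 0 - (e 0 + t) = _ at h0'
    change 0 - (e 1 + (x + t)) = _ at h1'
    change y - (e 2 + t) = _ at h2'
    exact ⟨c2 - q * c1 + q ^ 2 * c0 + b - c, by
      linear_combination h2' - q * h1' + q ^ 2 * h0' + hb - hc⟩
  · change 0 - (e 0 + (x + t)) = _ at h0'
    change 0 - (e 1 + t) = _ at h1'
    change y - (e 2 + t) = _ at h2'
    exact ⟨c2 - q * c1 + q ^ 2 * c0 + b + (q - 1) * c, by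
      linear_combination h2' - q * h1' + q ^ 2 * h0' + hb + (q - 1) * hc⟩
end



/-- Assume `d ∣ q³+1`, let `α = gcd(d, q+1)` and `γ = gcd(3, gcd(d, (q³+1)/d))`.
For all integers `k, k'`, the `G_{d,q}`-orbits of the lines
`L_k = {(a, a, ξ^{k(d/α)} a)}` and `L_{k'}` coincide iff `k ≡ k' (mod γ)`. -/
theorem stmt_14 (d q : ℕ) (hd : 1 ≤ d) (hq : q < d) (hdq : Nat.gcd d q = 1)
    (hdvd : d ∣ q ^ 3 + 1)
    (ξ : ℂ) (hξ : IsPrimitiveRoot ξ d)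
    (A B : (Matrix (Fin 3) (Fin 3) ℂ)ˣ)
    (hA : (A : Matrix (Fin 3) (Fin 3) ℂ) = Matrix.diagonal ![1, ξ, ξ ^ q])
    (hB : (B : Matrix (Fin 3) (Fin 3) ℂ) = !![0,1,0; 0,0,1; 1,0,0])
    (k k' : ℤ) :
    {x : Fin 3 → ℂ | ∃ g ∈ Subgroup.closure {A, B}, ∃ a : ℂ,
        x = (g : Matrix (Fin 3) (Fin 3) ℂ).mulVec
          ![a, a, ξ ^ (k * ((d / Nat.gcd d (q + 1) : ℕ) : ℤ)) * a]} =
      {x : Fin 3 → ℂ | ∃ g ∈ Subgroup.closure {A, B}, ∃ a : ℂ,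
        x = (g : Matrix (Fin 3) (Fin 3) ℂ).mulVec
          ![a, a, ξ ^ (k' * ((d / Nat.gcd d (q + 1) : ℕ) : ℤ)) * a]} ↔
      ((Nat.gcd 3 (Nat.gcd d ((q ^ 3 + 1) / d)) : ℤ)) ∣ k - k' := by
  rw [← nt_key d q hd hdvd]
  have hm : (d : ℤ) ∣ ((q : ℤ) + 1) * ((d / Nat.gcd d (q + 1) : ℕ) : ℤ) := by
    have h : d ∣ (q + 1) * (d / Nat.gcd d (q + 1)) := by
      conv_lhs => rw [← Nat.mul_div_cancel' (Nat.gcd_dvd_left d (q + 1))]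
      exact mul_dvd_mul_right (Nat.gcd_dvd_right d (q + 1)) _
    exact_mod_cast h
  generalize ((d / Nat.gcd d (q + 1) : ℕ) : ℤ) = m at *
  constructor
  · intro h
    have := orbit_conv d q hd hdvd ξ hξ A B hA hB (k' * m) (k * m)
      (by rw [mul_left_comm]; exact hm.mul_left _) (by
        rw [← h]
        exact ⟨1, one_mem _, 1, by simp⟩)
    simpa only [sub_mul] using this
  · rintro ⟨t, ht⟩
    rw [sub_mul] at ht
    apply Set.Subset.antisymm
    · exact orbit_sub d q hd ξ hξ A B hA hB _ _ (-t) (by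
        obtain ⟨c, hc⟩ := ht
        exact ⟨-c, by linear_combination -hc⟩)
    · exact orbit_sub d q hd ξ hξ A B hA hB _ _ t ht
end

section
/- Assume d divides q³ + 1 and let β = gcd(d, q² − q + 1). Then 3 divides d² + 8β, and the number of conjugacy classes of the group G_{d,q} equals (d² + 8β)/3. -/
open Matrix
set_option autoImplicit false

theorem count_aux {N : Type*} [AddCommGroup N] [Fintype N] [DecidableEq N]
    (s : Fin 3 → N →+ N) (h0 : ∀ n, s 0 n = n) (hs : ∀ i j n, s i (s j n) = s (i + j) n) :
    Nat.card {p : (N × Fin 3) × (N × Fin 3) // p.1.1 + s p.1.2 p.2.1 = p.2.1 + s p.2.2 p.1.1}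
      = Fintype.card N * (Fintype.card N + 8 * Nat.card {n : N // s 1 n = n}) := by
  classical
  have hfix : ∀ i : Fin 3, i ≠ 0 → ∀ n, s i n = n ↔ s 1 n = n := by
    intro i hi n
    fin_cases i
    · exact absurd rfl hi
    · rfl
    · constructor
      · intro h
        have h' : s 2 n = n := h
        have := hs 2 2 n
        rw [h', h'] at this
        exact this.symm
      · intro h
        have := hs 1 1 n
        rw [h, h] at this
        exact this.symm
  set β := Nat.card {n : N // s 1 n = n} with hβ
  have hβ' : ∀ i : Fin 3, i ≠ 0 → (∑ m : N, if s i m = m then 1 else 0) = β := by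
    intro i hi
    rw [hβ, Nat.card_eq_fintype_card, Fintype.card_subtype, Finset.card_filter]
    exact Finset.sum_congr rfl fun m _ => by simp only [hfix i hi m]
  have hex : ∀ i : Fin 3, i ≠ 0 → ∀ j n, ∃ m0, n + s i m0 = m0 + s j n := by
    intro i hi j n
    by_cases hj : j = 0
    · exact ⟨0, by simp [hj, h0]⟩
    by_cases hij : i = j
    · exact ⟨n, by rw [hij]⟩
    have : i + i = j := by revert i j; decide
    exact ⟨n + s i n, by rw [map_add, hs, this]; abel⟩
  have key : ∀ i : Fin 3, i ≠ 0 → ∀ j n,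
      (∑ m : N, if n + s i m = m + s j n then 1 else 0) = β := by
    intro i hi j n
    obtain ⟨m0, hm0⟩ := hex i hi j n
    rw [← hβ' i hi, ← Equiv.sum_comp (Equiv.addRight m0)]
    refine Finset.sum_congr rfl fun m _ => ?_
    congr 1
    simp only [Equiv.coe_addRight, map_add, eq_iff_iff]
    constructor
    · intro h
      have h2 : s i m + (n + s i m0) = m + (m0 + s j n) := by
        rw [← add_assoc m, ← h]; abel
      rw [hm0] at h2
      exact add_right_cancel h2
    · intro h
      rw [h, add_left_comm, hm0, add_assoc]
  have key2 : ∀ i j : Fin 3, ∑ n : N, ∑ m : N, (if n + s i m = m + s j n then 1 else 0)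
      = Fintype.card N * (if i = 0 ∧ j = 0 then Fintype.card N else β) := by
    intro i j
    by_cases hi : i = 0
    · by_cases hj : j = 0
      · subst hi hj
        simp [h0, add_comm]
      · subst hi
        rw [Finset.sum_comm]
        have : ∀ m : N, (∑ n : N, if n + s 0 m = m + s j n then 1 else 0) = β := by
          intro m
          rw [← key j hj 0 m]
          exact Finset.sum_congr rfl fun n _ => by simp only [eq_comm]
        simp [this, hj]
    · simp [key i hi, hi]
  rw [Nat.card_eq_fintype_card, Fintype.card_subtype, Finset.card_filter]
  simp only [Fintype.sum_prod_type]
  have : ∀ n : N, ∑ i : Fin 3, ∑ m : N, ∑ j : Fin 3, (if n + s i m = m + s j n then 1 else 0)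
      = ∑ i : Fin 3, ∑ j : Fin 3, ∑ m : N, (if n + s i m = m + s j n then 1 else 0) :=
    fun n => Finset.sum_congr rfl fun i _ => Finset.sum_comm
  simp only [this]
  refine Finset.sum_comm.trans ?_
  have : ∀ i : Fin 3, ∑ n : N, ∑ j : Fin 3, ∑ m : N, (if n + s i m = m + s j n then 1 else 0)
      = ∑ j : Fin 3, Fintype.card N * (if i = 0 ∧ j = 0 then Fintype.card N else β) := by
    intro i
    rw [Finset.sum_comm]
    exact Finset.sum_congr rfl fun j _ => key2 i j
  rw [Finset.sum_congr rfl fun i _ => this i]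
  simp only [Fin.sum_univ_three]
  simp
  ring

theorem group_aux {G N : Type*} [Group G] [AddCommGroup N] [Fintype N]
    (s : Fin 3 → N →+ N) (h0 : ∀ n, s 0 n = n) (hs : ∀ i j n, s i (s j n) = s (i + j) n)
    (f : N × Fin 3 → G) (hf : Function.Bijective f)
    (hmul : ∀ n i m j, f (n, i) * f (m, j) = f (n + s i m, i + j)) :
    Nat.card (ConjClasses G) * 3 = Fintype.card N + 8 * Nat.card {n : N // s 1 n = n} := by
  classical
  have e := Equiv.ofBijective f hf
  have h1 := card_comm_eq_card_conjClasses_mul_card G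
  have h2 : Nat.card { p : G × G // Commute p.1 p.2 } = Nat.card {p : (N × Fin 3) × (N × Fin 3) // p.1.1 + s p.1.2 p.2.1 = p.2.1 + s p.2.2 p.1.1} := by
    symm
    refine Nat.card_congr (Equiv.subtypeEquiv ((Equiv.ofBijective f hf).prodCongr (Equiv.ofBijective f hf)) ?_)
    rintro ⟨⟨n, i⟩, ⟨m, j⟩⟩
    simp [Commute, SemiconjBy, hmul, hf.1.eq_iff, add_comm]
  rw [h2, count_aux s h0 hs, ← Nat.card_congr e] at h1
  simp only [Nat.card_eq_fintype_card, Fintype.card_prod, Fintype.card_fin] at h1 ⊢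
  have : 0 < Fintype.card N := Fintype.card_pos
  apply Nat.eq_of_mul_eq_mul_left this
  rw [h1]; ring

/-- third coordinate completion -/
def vv {R : Type*} [CommRing R] (r : R) (n : R × R) : Fin 3 → R :=
  ![n.1, n.2, r * n.2 - r ^ 2 * n.1]

theorem vv_add {R : Type*} [CommRing R] (r : R) (n m : R × R) (k : Fin 3) :
    vv r (n + m) k = vv r n k + vv r m k := by
  fin_cases k <;> simp [vv]; ring

/-- cyclic shift -/
def ss {R : Type*} [CommRing R] (r : R) (i : Fin 3) : R × R →+ R × R :=
  AddMonoidHom.mk' (fun n => (vv r n i, vv r n (i + 1))) fun n m => by simp [vv_add]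

theorem vv_ss {R : Type*} [CommRing R] (r : R) (hr : r ^ 3 = -1) (n : R × R) (i k : Fin 3) :
    vv r (ss r i n) k = vv r n (k + i) := by
  fin_cases i <;> fin_cases k <;> simp [vv, ss] <;>
    first
    | linear_combination (-n.1) * hr
    | linear_combination (r * n.1 - n.2) * hr

theorem vv_inj {R : Type*} [CommRing R] (r : R) {n m : R × R} (h : ∀ k, vv r n k = vv r m k) :
    n = m := Prod.ext (h 0) (h 1)

theorem ss_ss {R : Type*} [CommRing R] (r : R) (hr : r ^ 3 = -1) (n : R × R) (i j : Fin 3) :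
    ss r i (ss r j n) = ss r (i + j) n :=
  vv_inj r fun k => by simp only [vv_ss r hr, add_assoc]

theorem ss_zero {R : Type*} [CommRing R] (r : R) (n : R × R) : ss r 0 n = n := rfl

theorem fix_card (d q : ℕ) [NeZero d] :
    Nat.card {n : ZMod d × ZMod d // ss (q : ZMod d) 1 n = n} = Nat.gcd d (q ^ 2 - q + 1) := by
  have h := IsCyclic.card_powMonoidHom_ker (G := Multiplicative (ZMod d)) (q ^ 2 - q + 1)
  have h2 : Nat.card (Multiplicative (ZMod d)) = d := by simp
  rw [h2] at h
  rw [← h]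
  have hc : ((q ^ 2 - q + 1 : ℕ) : ZMod d) = (q : ZMod d) ^ 2 - q + 1 := by
    rw [Nat.cast_add, Nat.cast_sub (by nlinarith [Nat.le_self_pow two_ne_zero q])]; simp
  have hk : ∀ a : ZMod d, Multiplicative.ofAdd a ∈
      (powMonoidHom (q ^ 2 - q + 1) : Multiplicative (ZMod d) →* _).ker ↔
      ((q : ZMod d) ^ 2 - q + 1) * a = 0 := by
    intro a
    rw [MonoidHom.mem_ker, powMonoidHom_apply, ← ofAdd_nsmul, ofAdd_eq_one, nsmul_eq_mul, hc]
  have hss : ∀ n : ZMod d × ZMod d, ss (q : ZMod d) 1 n = n ↔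
      n.2 = n.1 ∧ (q : ZMod d) * n.2 - q ^ 2 * n.1 = n.2 := fun n => Prod.ext_iff
  refine Nat.card_congr
    { toFun := fun n => ⟨Multiplicative.ofAdd n.1.1, ?_⟩
      invFun := fun a => ⟨(a.1.toAdd, a.1.toAdd), ?_⟩
      left_inv := ?_
      right_inv := ?_ }
  · obtain ⟨⟨a, b⟩, h⟩ := n
    rw [hss] at h
    obtain ⟨h1, h2⟩ := h
    dsimp only at h1 h2 ⊢
    subst h1
    rw [hk]
    linear_combination -h2
  · obtain ⟨a, h⟩ := a
    have := (hk a.toAdd).1 h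
    rw [hss]
    refine ⟨rfl, ?_⟩
    dsimp only
    linear_combination -this
  · rintro ⟨⟨a, b⟩, h⟩
    have := ((hss _).1 h).1
    dsimp only at this
    subst this
    rfl
  · rintro ⟨a, h⟩
    rfl

/-- the monomial matrix -/
def MM {R : Type*} [CommRing R] (χ : AddChar R ℂ) (r : R) (p : (R × R) × Fin 3) :
    Matrix (Fin 3) (Fin 3) ℂ :=
  Matrix.of fun k l => if l = k + p.2 then χ (vv r p.1 k) else 0

theorem MM_mul {R : Type*} [CommRing R] (χ : AddChar R ℂ) (r : R) (hr : r ^ 3 = -1)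
    (n m : R × R) (i j : Fin 3) :
    MM χ r (n, i) * MM χ r (m, j) = MM χ r (n + ss r i m, i + j) := by
  ext k l
  rw [Matrix.mul_apply, Finset.sum_eq_single (k + i)]
  · simp [MM, vv_add, vv_ss r hr, AddChar.map_add_eq_mul, add_assoc]
  · intro b _ hb
    simp [MM, hb]
  · simp

theorem MM_one {R : Type*} [CommRing R] (χ : AddChar R ℂ) (r : R) :
    MM χ r (0, 0) = 1 := by
  ext k l
  have : vv r (0 : R × R) k = 0 := by fin_cases k <;> simp [vv]
  simp [MM, Matrix.one_apply, this, eq_comm]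

theorem MM_inv1 {R : Type*} [CommRing R] (χ : AddChar R ℂ) (r : R) (hr : r ^ 3 = -1)
    (p : (R × R) × Fin 3) :
    MM χ r p * MM χ r (-(ss r (-p.2) p.1), -p.2) = 1 := by
  obtain ⟨n, i⟩ := p
  rw [MM_mul χ r hr, ← MM_one χ r]
  simp [ss_ss r hr, ss_zero]

/-- the monomial matrix as a unit -/
def UU {R : Type*} [CommRing R] (χ : AddChar R ℂ) (r : R) (hr : r ^ 3 = -1)
    (p : (R × R) × Fin 3) : (Matrix (Fin 3) (Fin 3) ℂ)ˣ where
  val := MM χ r p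
  inv := MM χ r (-(ss r (-p.2) p.1), -p.2)
  val_inv := MM_inv1 χ r hr p
  inv_val := by
    rw [mul_eq_one_comm]; exact MM_inv1 χ r hr p

theorem UU_mul {R : Type*} [CommRing R] (χ : AddChar R ℂ) (r : R) (hr : r ^ 3 = -1)
    (n m : R × R) (i j : Fin 3) :
    UU χ r hr (n, i) * UU χ r hr (m, j) = UU χ r hr (n + ss r i m, i + j) :=
  Units.ext (MM_mul χ r hr n m i j)

theorem UU_inj {R : Type*} [CommRing R] (χ : AddChar R ℂ) (hχ : Function.Injective χ)
    (r : R) (hr : r ^ 3 = -1) : Function.Injective (UU χ r hr) := by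
  rintro ⟨n, i⟩ ⟨m, j⟩ h
  have h1 : MM χ r (n, i) = MM χ r (m, j) := congrArg Units.val h
  have h2 : ∀ k, (MM χ r (n, i)) k (k + i) = (MM χ r (m, j)) k (k + i) := fun k => by rw [h1]
  have hne : ∀ a, χ a ≠ 0 := fun a => (χ.val_isUnit a).ne_zero
  have hij : i = j := by
    by_contra hij
    have := h2 0
    simp [MM, hij, hne] at this
  subst hij
  have : n = m := vv_inj r fun k => hχ (by simpa [MM] using h2 k)
  rw [this]

/-- the subgroup of monomial matrices -/
def SS {R : Type*} [CommRing R] (χ : AddChar R ℂ) (r : R) (hr : r ^ 3 = -1) :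
    Subgroup (Matrix (Fin 3) (Fin 3) ℂ)ˣ where
  carrier := Set.range (UU χ r hr)
  one_mem' := ⟨(0, 0), Units.ext (MM_one χ r)⟩
  mul_mem' := by
    rintro _ _ ⟨⟨n, i⟩, rfl⟩ ⟨⟨m, j⟩, rfl⟩
    exact ⟨_, (UU_mul χ r hr n m i j).symm⟩
  inv_mem' := by
    rintro _ ⟨p, rfl⟩
    exact ⟨(-(ss r (-p.2) p.1), -p.2), Units.ext rfl⟩

theorem UU_pow {R : Type*} [CommRing R] (χ : AddChar R ℂ) (r : R) (hr : r ^ 3 = -1)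
    (n : R × R) (k : ℕ) : UU χ r hr (n, 0) ^ k = UU χ r hr (k • n, 0) := by
  induction k with
  | zero => rw [pow_zero, zero_smul]; exact (Units.ext (MM_one χ r)).symm
  | succ k ih => rw [pow_succ, ih, UU_mul, ss_zero, succ_nsmul]; rfl

theorem closure_eq (d : ℕ) [NeZero d] (χ : AddChar (ZMod d) ℂ) (r : ZMod d) (hr : r ^ 3 = -1) :
    Subgroup.closure {UU χ r hr ((0, 1), 0), UU χ r hr (0, 1)} = SS χ r hr := by
  apply le_antisymm
  · rw [Subgroup.closure_le]
    rintro x (rfl | rfl)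
    · exact ⟨_, rfl⟩
    · exact ⟨_, rfl⟩
  · rintro _ ⟨⟨⟨a, b⟩, i⟩, rfl⟩
    set H := Subgroup.closure {UU χ r hr ((0, 1), 0), UU χ r hr (0, 1)} with hH
    have hA : UU χ r hr ((0, 1), 0) ∈ H := Subgroup.subset_closure (by simp)
    have hB : UU χ r hr (0, 1) ∈ H := Subgroup.subset_closure (by simp)
    have hB2 : UU χ r hr (0, 2) ∈ H := by
      have := H.mul_mem hB hB
      rw [UU_mul] at this
      simpa using this
    have hI : ∀ i, UU χ r hr (0, i) ∈ H := by
      intro i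
      fin_cases i
      · have h1 : UU χ r hr (0, 0) = 1 := Units.ext (MM_one χ r)
        exact h1 ▸ H.one_mem
      · exact hB
      · exact hB2
    have hC : UU χ r hr ((1, r), 0) ∈ H := by
      have := H.mul_mem (H.mul_mem hB hA) hB2
      rw [UU_mul, UU_mul] at this
      have e : (0 : ZMod d × ZMod d) + ss r 1 (0, 1) + ss r (1 + 0) 0 = (1, r) := by
        rw [map_zero]
        simp [ss, vv]
      rw [e] at this
      exact this
    have := H.mul_mem (H.mul_mem (H.pow_mem hC a.val) (H.pow_mem hA (b - r * a).val)) (hI i)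
    rw [UU_pow, UU_pow, UU_mul, UU_mul, ss_zero, map_zero, add_zero, zero_add, zero_add] at this
    have e : a.val • ((1 : ZMod d), r) + (b - r * a).val • ((0 : ZMod d), (1 : ZMod d)) = (a, b) := by
      ext
      · simp
      · simp; ring
    rwa [e] at this

theorem stmt_15 (d q : ℕ) (hd : 1 ≤ d) (hq : q < d) (hdq : Nat.gcd d q = 1)
    (hdvd : d ∣ q ^ 3 + 1)
    (ξ : ℂ) (hξ : IsPrimitiveRoot ξ d)
    (A B : (Matrix (Fin 3) (Fin 3) ℂ)ˣ)
    (hA : (A : Matrix (Fin 3) (Fin 3) ℂ) = Matrix.diagonal ![1, ξ, ξ ^ q])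
    (hB : (B : Matrix (Fin 3) (Fin 3) ℂ) = !![0,1,0; 0,0,1; 1,0,0]) :
    3 ∣ d ^ 2 + 8 * Nat.gcd d (q ^ 2 - q + 1) ∧
    Nat.card (ConjClasses ↥(Subgroup.closure {A, B})) =
      (d ^ 2 + 8 * Nat.gcd d (q ^ 2 - q + 1)) / 3 := by
  have : NeZero d := ⟨by omega⟩
  have hr : (q : ZMod d) ^ 3 = -1 := by
    have := (ZMod.natCast_eq_zero_iff (q ^ 3 + 1) d).2 hdvd
    push_cast at this
    exact eq_neg_of_add_eq_zero_left this
  set χ := AddChar.zmodChar d hξ.pow_eq_one with hχd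
  have hχ : Function.Injective χ := by
    intro a b h
    rw [hχd, AddChar.zmodChar_apply, AddChar.zmodChar_apply] at h
    exact ZMod.val_injective d (hξ.pow_inj a.val_lt b.val_lt h)
  have hχ1 : χ 1 = ξ := by
    simpa using AddChar.zmodChar_apply' hξ.pow_eq_one 1
  have hχq : χ (q : ZMod d) = ξ ^ q := AddChar.zmodChar_apply' hξ.pow_eq_one q
  have eA : A = UU χ (q : ZMod d) hr ((0, 1), 0) := by
    apply Units.ext
    rw [hA]
    show _ = MM _ _ _
    ext k l
    fin_cases k <;> fin_cases l <;> simp [MM, vv, hχ1, hχq, Matrix.diagonal]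
  have eB : B = UU χ (q : ZMod d) hr (0, 1) := by
    apply Units.ext
    rw [hB]
    show _ = MM _ _ _
    ext k l
    fin_cases k <;> fin_cases l <;> simp [MM, vv]
  have hcl : Subgroup.closure {A, B} = SS χ (q : ZMod d) hr := by
    rw [eA, eB, closure_eq]
  rw [hcl]
  have key := group_aux (G := SS χ (q : ZMod d) hr) (ss (q : ZMod d)) (ss_zero _)
    (fun i j n => ss_ss _ hr n i j) (fun p => ⟨UU χ (q : ZMod d) hr p, p, rfl⟩)
    ⟨fun p p' h => UU_inj χ hχ _ hr (congrArg Subtype.val h),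
      fun ⟨_, p, hp⟩ => ⟨p, Subtype.ext hp⟩⟩
    (fun n i m j => Subtype.ext (UU_mul χ _ hr n m i j))
  rw [fix_card, Fintype.card_prod, ZMod.card, ← pow_two] at key
  omega
end

section
/- Let ε ∈ ℂ be a primitive cube root of unity, let k ∈ {0, 1, 2}, and let c ∈ ℂ. Define φ : ℂ³ → ℂ³ by φ(x,y,z) = ( x·e^{y+z}, ε^k(e^{(ε−1)y+(ε²−1)z} − 1), ε^{2k}(e^{(ε²−1)y+(ε−1)z} − 1) ), and define the (a priori rational) map N_c(u,v,w) = ( c·u·(v+ε^k), (w − ε^k v)/(v + ε^k), (−ε^{2k} v)/(v + ε^k) ). Then for every (x,y,z) ∈ ℂ³ the second coordinate of φ(x,y,z) plus ε^k is nonzero (so N_c is defined at φ(x,y,z)), and N_c(φ(x,y,z)) = φ(c ε^k x, ε y, ε² z). In other words, φ conjugates the nonlinear transformation N_c into the linear map diag(c ε^k, ε, ε²). -/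
open Complex

/-- The map `φ(x,y,z) = (x e^{y+z}, ε^k(e^{(ε−1)y+(ε²−1)z} − 1), ε^{2k}(e^{(ε²−1)y+(ε−1)z} − 1))`. -/
noncomputable def phiMap (ε : ℂ) (k : ℕ) (p : ℂ × ℂ × ℂ) : ℂ × ℂ × ℂ :=
  (p.1 * Complex.exp (p.2.1 + p.2.2),
   ε ^ k * (Complex.exp ((ε - 1) * p.2.1 + (ε ^ 2 - 1) * p.2.2) - 1),
   ε ^ (2 * k) * (Complex.exp ((ε ^ 2 - 1) * p.2.1 + (ε - 1) * p.2.2) - 1))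

/-- The (a priori rational) map
`N_c(u,v,w) = (c u (v+ε^k), (w − ε^k v)/(v + ε^k), (−ε^{2k} v)/(v + ε^k))`. -/
noncomputable def nMap (ε : ℂ) (k : ℕ) (c : ℂ) (p : ℂ × ℂ × ℂ) : ℂ × ℂ × ℂ :=
  (c * p.1 * (p.2.1 + ε ^ k),
   (p.2.2 - ε ^ k * p.2.1) / (p.2.1 + ε ^ k),
   (-(ε ^ (2 * k)) * p.2.1) / (p.2.1 + ε ^ k))

/-- For `ε` a primitive cube root of unity, `k ∈ {0,1,2}` and `c ∈ ℂ`: for every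
`(x,y,z) ∈ ℂ³` the second coordinate of `φ(x,y,z)` plus `ε^k` is nonzero (so `N_c` is
defined at `φ(x,y,z)`), and `N_c(φ(x,y,z)) = φ(cε^k x, εy, ε²z)`; that is, `φ`
conjugates the nonlinear transformation `N_c` into the linear map `diag(cε^k, ε, ε²)`. -/
theorem stmt_16 (ε : ℂ) (hε : IsPrimitiveRoot ε 3) (k : ℕ) (hk : k < 3) (c : ℂ)
    (x y z : ℂ) :
    (phiMap ε k (x, y, z)).2.1 + ε ^ k ≠ 0 ∧
    nMap ε k c (phiMap ε k (x, y, z)) = phiMap ε k (c * ε ^ k * x, ε * y, ε ^ 2 * z) := by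
  have h3 : ε ^ 3 = 1 := hε.pow_eq_one
  have hz : ε ≠ 0 := hε.ne_zero (by norm_num)
  have hk0 : ε ^ k ≠ 0 := pow_ne_zero k hz
  have hA := Complex.exp_ne_zero ((ε - 1) * y + (ε ^ 2 - 1) * z)
  have e1 : Complex.exp (ε * y + ε ^ 2 * z)
      = Complex.exp (y + z) * Complex.exp ((ε - 1) * y + (ε ^ 2 - 1) * z) := by
    rw [← Complex.exp_add]; congr 1; ring
  have e2 : Complex.exp ((ε - 1) * (ε * y) + (ε ^ 2 - 1) * (ε ^ 2 * z))
      = Complex.exp ((ε ^ 2 - 1) * y + (ε - 1) * z)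
        / Complex.exp ((ε - 1) * y + (ε ^ 2 - 1) * z) := by
    rw [← Complex.exp_sub]; congr 1; linear_combination (ε * z) * h3
  have e3 : Complex.exp ((ε ^ 2 - 1) * (ε * y) + (ε - 1) * (ε ^ 2 * z))
      = (Complex.exp ((ε - 1) * y + (ε ^ 2 - 1) * z))⁻¹ := by
    rw [← Complex.exp_neg]; congr 1; linear_combination (y + z) * h3
  have hv : ∀ A : ℂ, ε ^ k * (A - 1) + ε ^ k = ε ^ k * A := fun A => by ring
  have h2k : ε ^ (2 * k) = ε ^ k * ε ^ k := by rw [two_mul, pow_add]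
  refine ⟨?_, ?_⟩
  · simp only [phiMap, hv]
    exact mul_ne_zero hk0 hA
  · simp only [phiMap, nMap, hv, e1, e2, e3, h2k]
    generalize Complex.exp ((ε - 1) * y + (ε ^ 2 - 1) * z) = A at *
    refine Prod.ext ?_ (Prod.ext ?_ ?_)
    · simp only []
      ring
    · simp only []
      field_simp
      ring
    · simp only []
      field_simp
      ring
end

section
/- Let G₁ = {I₂, −I₂} ⊂ GL₂(ℂ) act on the polynomial ring ℂ[x,y] by (x,y) ↦ (−x,−y), and let G₂ ⊂ GL₂(ℂ) be the cyclic group of order 4 generated by diag(i, −1), acting by (x,y) ↦ (i x, −y). Then the ℂ-algebra endomorphism of ℂ[x,y] determined by x ↦ x², y ↦ y maps the invariant subalgebra ℂ[x,y]^{G₁} into ℂ[x,y]^{G₂}, and the induced map ℂ[x,y]^{G₁} → ℂ[x,y]^{G₂} is an isomorphism of ℂ-algebras. -/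
open MvPolynomial

/-- Substitution `x ↦ −x`, `y ↦ −y` (the nontrivial element of `G₁ = {I₂, −I₂}`). -/
noncomputable def sigmaOne : MvPolynomial (Fin 2) ℂ →ₐ[ℂ] MvPolynomial (Fin 2) ℂ :=
  MvPolynomial.aeval ![-(MvPolynomial.X 0), -(MvPolynomial.X 1)]

/-- Substitution `x ↦ i x`, `y ↦ −y` (the generator `diag(i, −1)` of `G₂`). -/
noncomputable def sigmaTwo : MvPolynomial (Fin 2) ℂ →ₐ[ℂ] MvPolynomial (Fin 2) ℂ :=
  MvPolynomial.aeval ![MvPolynomial.C Complex.I * MvPolynomial.X 0, -(MvPolynomial.X 1)]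

/-- The `ℂ`-algebra endomorphism of `ℂ[x,y]` determined by `x ↦ x²`, `y ↦ y`. -/
noncomputable def sqFirst : MvPolynomial (Fin 2) ℂ →ₐ[ℂ] MvPolynomial (Fin 2) ℂ :=
  MvPolynomial.aeval ![MvPolynomial.X 0 ^ 2, MvPolynomial.X 1]

theorem aux_emb_inj {m n : Fin 2 →₀ ℕ}
    (h : Finsupp.single (0 : Fin 2) (2 * m 0) + Finsupp.single 1 (m 1) =
      Finsupp.single (0 : Fin 2) (2 * n 0) + Finsupp.single 1 (n 1)) : m = n := by
  have h0 := DFunLike.congr_fun h 0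
  have h1 := DFunLike.congr_fun h 1
  simp at h0 h1
  ext i
  fin_cases i
  · simpa using h0
  · simpa using h1

theorem aux_monomial (m : Fin 2 →₀ ℕ) (c : ℂ) :
    (MvPolynomial.monomial m c : MvPolynomial (Fin 2) ℂ) =
      MvPolynomial.C c * (MvPolynomial.X 0 ^ m 0 * MvPolynomial.X 1 ^ m 1) := by
  rw [MvPolynomial.monomial_eq, Finsupp.prod_fintype _ _ (by simp), Fin.prod_univ_two]

theorem aux_sq_monomial (m : Fin 2 →₀ ℕ) (c : ℂ) :
    sqFirst (MvPolynomial.monomial m c) = MvPolynomial.monomial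
      (Finsupp.single (0 : Fin 2) (2 * m 0) + Finsupp.single 1 (m 1)) c := by
  rw [aux_monomial, aux_monomial]
  simp [sqFirst, MvPolynomial.algebraMap_eq, ← pow_mul]

theorem aux_sq_coeff (p : MvPolynomial (Fin 2) ℂ) (m : Fin 2 →₀ ℕ) :
    MvPolynomial.coeff (Finsupp.single (0 : Fin 2) (2 * m 0) + Finsupp.single 1 (m 1))
      (sqFirst p) = MvPolynomial.coeff m p := by
  classical
  induction p using MvPolynomial.induction_on' with
  | monomial n c =>
    rw [aux_sq_monomial, MvPolynomial.coeff_monomial, MvPolynomial.coeff_monomial]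
    by_cases h : n = m
    · simp [h]
    · rw [if_neg h, if_neg (fun h' => h (aux_emb_inj h'))]
  | add p q hp hq => rw [map_add, MvPolynomial.coeff_add, MvPolynomial.coeff_add, hp, hq]

theorem aux_sq_inj : Function.Injective sqFirst := by
  intro p q h
  ext m
  rw [← aux_sq_coeff p, ← aux_sq_coeff q, h]

theorem aux_two_monomial (m : Fin 2 →₀ ℕ) (c : ℂ) :
    sigmaTwo (MvPolynomial.monomial m c) =
      MvPolynomial.monomial m (Complex.I ^ m 0 * (-1) ^ m 1 * c) := by
  rw [aux_monomial, aux_monomial]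
  simp only [sigmaTwo, map_mul, map_pow, MvPolynomial.aeval_X, MvPolynomial.aeval_C,
    MvPolynomial.algebraMap_eq, Matrix.cons_val_zero, Matrix.cons_val_one, mul_pow, map_neg,
    map_one]
  rw [neg_pow (MvPolynomial.X 1 : MvPolynomial (Fin 2) ℂ)]
  ring

theorem aux_two_coeff (p : MvPolynomial (Fin 2) ℂ) (m : Fin 2 →₀ ℕ) :
    MvPolynomial.coeff m (sigmaTwo p) =
      Complex.I ^ m 0 * (-1) ^ m 1 * MvPolynomial.coeff m p := by
  classical
  induction p using MvPolynomial.induction_on' with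
  | monomial n c =>
    rw [aux_two_monomial, MvPolynomial.coeff_monomial, MvPolynomial.coeff_monomial]
    by_cases h : n = m
    · simp [h]
    · simp [h]
  | add p q hp hq => simp [hp, hq, mul_add]

theorem aux_comm (p : MvPolynomial (Fin 2) ℂ) :
    sqFirst (sigmaOne p) = sigmaTwo (sqFirst p) := by
  have h : sqFirst.comp sigmaOne = sigmaTwo.comp sqFirst := by
    apply MvPolynomial.algHom_ext
    intro i
    fin_cases i
    · simp [sqFirst, sigmaOne, sigmaTwo, mul_pow]
      rw [← map_pow, Complex.I_sq]
      simp
    · simp [sqFirst, sigmaOne, sigmaTwo]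
  exact DFunLike.congr_fun h p

theorem aux_even (a b : ℕ) (h : Complex.I ^ a * (-1) ^ b = 1) : 2 * (a / 2) = a := by
  rcases Nat.even_or_odd a with ha | ha
  · exact Nat.two_mul_div_two_of_even ha
  · exfalso
    have h2 : (Complex.I ^ a * (-1) ^ b) ^ 2 = 1 := by rw [h, one_pow]
    have h3 : (Complex.I ^ a * (-1) ^ b) ^ 2 = (Complex.I ^ 2) ^ a * ((-1) ^ 2) ^ b := by
      rw [mul_pow, pow_right_comm, pow_right_comm (-1 : ℂ)]
    rw [h3, Complex.I_sq, ha.neg_one_pow] at h2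
    norm_num at h2

theorem aux_surj (p : MvPolynomial (Fin 2) ℂ) (hp : sigmaTwo p = p) : ∃ q, sqFirst q = p := by
  refine ⟨∑ m ∈ p.support, MvPolynomial.monomial
    (Finsupp.single (0 : Fin 2) (m 0 / 2) + Finsupp.single 1 (m 1)) (p.coeff m), ?_⟩
  rw [map_sum]
  conv_rhs => rw [p.as_sum]
  refine Finset.sum_congr rfl fun m hm => ?_
  rw [aux_sq_monomial]
  have hc := aux_two_coeff p m
  rw [hp] at hc
  have h1 : Complex.I ^ m 0 * (-1) ^ m 1 = 1 :=
    mul_right_cancel₀ (MvPolynomial.mem_support_iff.1 hm) (by rw [← hc, one_mul])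
  have h2 := aux_even _ _ h1
  have h3 : Finsupp.single (0 : Fin 2) (m 0) + Finsupp.single 1 (m 1) = m := by
    ext i
    fin_cases i <;> simp
  simp [h2, h3]

/-- The endomorphism `x ↦ x²`, `y ↦ y` of `ℂ[x,y]` maps the invariant algebra
`ℂ[x,y]^{G₁}` into `ℂ[x,y]^{G₂}` and induces an isomorphism of `ℂ`-algebras
`ℂ[x,y]^{G₁} ≅ ℂ[x,y]^{G₂}` (the invariants being the equalizers of the corresponding
generator substitutions with the identity). -/
theorem stmt_17 :
    Subalgebra.map sqFirst
        (AlgHom.equalizer sigmaOne (AlgHom.id ℂ (MvPolynomial (Fin 2) ℂ))) =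
      AlgHom.equalizer sigmaTwo (AlgHom.id ℂ (MvPolynomial (Fin 2) ℂ)) ∧
    Set.InjOn sqFirst
      (AlgHom.equalizer sigmaOne (AlgHom.id ℂ (MvPolynomial (Fin 2) ℂ)) :
        Set (MvPolynomial (Fin 2) ℂ)) := by
  refine ⟨?_, aux_sq_inj.injOn⟩
  ext p
  simp only [Subalgebra.mem_map, AlgHom.mem_equalizer, AlgHom.id_apply]
  constructor
  · rintro ⟨q, hq, rfl⟩
    rw [← aux_comm, hq]
  · intro hp
    obtain ⟨q, rfl⟩ := aux_surj p hp
    exact ⟨q, aux_sq_inj (by rw [aux_comm, hp]), rfl⟩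
end

section
/- For every real number L > 0 and all real numbers s, N₁, N₂, ν₁, ν₂, set ⟨1⟩ = (N₁+3N₂)s/7 + (ν₁+3ν₂)/7, ⟨2⟩ = (3N₁+2N₂)s/7 + (3ν₁+2ν₂)/7, ⟨3⟩ = (5N₁+N₂)s/7 + (5ν₁+ν₂)/7, ⟨0⟩ = N₂s + ν₂, ⟨4⟩ = N₁s + ν₁, and K₁ = 1 + L^{⟨1⟩} + L^{2⟨1⟩}, K₂ = 1 + L^{⟨2⟩}, K₃ = 1 + L^{⟨3⟩}. Then the determinant of the 3×3 matrix with rows (K₁, −L^{⟨3⟩}, L^{⟨2⟩} − 1), (−L^{⟨0⟩}, K₂, −L^{⟨1⟩}), (0, −L^{⟨4⟩}, K₃) equals 1 + L^{(N₁+3N₂)s/7 + (ν₁+3ν₂)/7} + L^{(2N₁+6N₂)s/7 + (2ν₁+6ν₂)/7} + L^{(3N₁+2N₂)s/7 + (3ν₁+2ν₂)/7} + L^{(4N₁+5N₂)s/7 + (4ν₁+5ν₂)/7} + L^{(5N₁+N₂)s/7 + (5ν₁+ν₂)/7} + L^{(6N₁+4N₂)s/7 + (6ν₁+4ν₂)/7}.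 -/
open Real

/-- Veys' determinant `𝒟_r` for the cyclic quotient singularity `1/7(1,3)` coincides
with the sum `S_G(𝐍,𝛎;s)` over the cyclic group of order 7. -/
theorem stmt_18 (L : ℝ) (hL : 0 < L) (s N₁ N₂ ν₁ ν₂ : ℝ) :
    Matrix.det
        !![1 + L ^ ((N₁ + 3 * N₂) * s / 7 + (ν₁ + 3 * ν₂) / 7) +
              L ^ (2 * ((N₁ + 3 * N₂) * s / 7 + (ν₁ + 3 * ν₂) / 7)),
            -(L ^ ((5 * N₁ + N₂) * s / 7 + (5 * ν₁ + ν₂) / 7)),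
            L ^ ((3 * N₁ + 2 * N₂) * s / 7 + (3 * ν₁ + 2 * ν₂) / 7) - 1;
          -(L ^ (N₂ * s + ν₂)),
            1 + L ^ ((3 * N₁ + 2 * N₂) * s / 7 + (3 * ν₁ + 2 * ν₂) / 7),
            -(L ^ ((N₁ + 3 * N₂) * s / 7 + (ν₁ + 3 * ν₂) / 7));
          0, -(L ^ (N₁ * s + ν₁)),
            1 + L ^ ((5 * N₁ + N₂) * s / 7 + (5 * ν₁ + ν₂) / 7)] =
      1 + L ^ ((N₁ + 3 * N₂) * s / 7 + (ν₁ + 3 * ν₂) / 7) +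
        L ^ ((2 * N₁ + 6 * N₂) * s / 7 + (2 * ν₁ + 6 * ν₂) / 7) +
        L ^ ((3 * N₁ + 2 * N₂) * s / 7 + (3 * ν₁ + 2 * ν₂) / 7) +
        L ^ ((4 * N₁ + 5 * N₂) * s / 7 + (4 * ν₁ + 5 * ν₂) / 7) +
        L ^ ((5 * N₁ + N₂) * s / 7 + (5 * ν₁ + ν₂) / 7) +
        L ^ ((6 * N₁ + 4 * N₂) * s / 7 + (6 * ν₁ + 4 * ν₂) / 7) := by
  have key : ∀ (a b : ℕ) (x : ℝ), x = (N₁ * s + ν₁) / 7 * a + (N₂ * s + ν₂) / 7 * b →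
      L ^ x = (L ^ ((N₁ * s + ν₁) / 7)) ^ a * (L ^ ((N₂ * s + ν₂) / 7)) ^ b := by
    intro a b x hx
    rw [hx, Real.rpow_add hL, Real.rpow_mul_natCast hL.le, Real.rpow_mul_natCast hL.le]
  rw [key 1 3 ((N₁ + 3 * N₂) * s / 7 + (ν₁ + 3 * ν₂) / 7) (by push_cast; ring),
    key 2 6 (2 * ((N₁ + 3 * N₂) * s / 7 + (ν₁ + 3 * ν₂) / 7)) (by push_cast; ring),
    key 5 1 ((5 * N₁ + N₂) * s / 7 + (5 * ν₁ + ν₂) / 7) (by push_cast; ring),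
    key 3 2 ((3 * N₁ + 2 * N₂) * s / 7 + (3 * ν₁ + 2 * ν₂) / 7) (by push_cast; ring),
    key 0 7 (N₂ * s + ν₂) (by push_cast; ring),
    key 7 0 (N₁ * s + ν₁) (by push_cast; ring),
    key 2 6 ((2 * N₁ + 6 * N₂) * s / 7 + (2 * ν₁ + 6 * ν₂) / 7) (by push_cast; ring),
    key 4 5 ((4 * N₁ + 5 * N₂) * s / 7 + (4 * ν₁ + 5 * ν₂) / 7) (by push_cast; ring),
    key 6 4 ((6 * N₁ + 4 * N₂) * s / 7 + (6 * ν₁ + 4 * ν₂) / 7) (by push_cast; ring)]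
  generalize L ^ ((N₁ * s + ν₁) / 7) = u
  generalize L ^ ((N₂ * s + ν₂) / 7) = v
  rw [Matrix.det_fin_three]
  simp only [Matrix.of_apply, Matrix.cons_val]
  ring
end
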